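/- Let G be a triconnected 4-planar graph, T a separating triangle of G with edge set {e, e_in, e_out}, and let H_in and H_out be subhamiltonian cycles of the closed inside subgraph in⁺(T) and the closed outside subgraph out⁺(T), respectively. If the edges of T used by H_in are exactly {e_in, e} and the edges of T used by H_out are exactly {e_out, e}, then G is subhamiltonian. -/

import Mathlib

open Set

universe u

/-- A topological embedding of a simple graph in the plane: vertices are mapped to
distinct points and every edge is realized by a simple arc joining the images of its
endpoints, such that two arcs of distinct edges meet only in common endpoints and no
vertex point lies in the interior of an arc. -/
structure PlaneEmbedding {V : Type u} (G : SimpleGraph V) where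
  pos : V → ℝ × ℝ
  pos_inj : Function.Injective pos
  arc : ∀ ⦃u v : V⦄, G.Adj u v → Set (ℝ × ℝ)
  arc_symm : ∀ ⦃u v : V⦄ (h : G.Adj u v), arc h.symm = arc h
  arc_curve : ∀ ⦃u v : V⦄ (h : G.Adj u v), ∃ f : ℝ → ℝ × ℝ,
    ContinuousOn f (Set.Icc 0 1) ∧ Set.InjOn f (Set.Icc 0 1) ∧
    f 0 = pos u ∧ f 1 = pos v ∧ f '' Set.Icc 0 1 = arc h
  arc_inter : ∀ ⦃u v w z : V⦄ (h₁ : G.Adj u v) (h₂ : G.Adj w z),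
    s(u, v) ≠ s(w, z) → arc h₁ ∩ arc h₂ ⊆ ({pos u, pos v} ∩ {pos w, pos z} : Set (ℝ × ℝ))
  pos_arc : ∀ ⦃u v : V⦄ (h : G.Adj u v) (w : V), pos w ∈ arc h → w = u ∨ w = v

/-- A graph is planar if it admits a topological embedding in the plane. -/
def SimpleGraph.IsPlanar {V : Type u} (G : SimpleGraph V) : Prop :=
  Nonempty (PlaneEmbedding G)

/-- The point set covered by a plane embedding. -/
def PlaneEmbedding.drawing {V : Type u} {G : SimpleGraph V} (E : PlaneEmbedding G) :
    Set (ℝ × ℝ) :=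
  Set.range E.pos ∪ ⋃ (u : V) (v : V) (h : G.Adj u v), E.arc h

/-- A face of a plane embedding is a connected component of the complement of the drawing. -/
def PlaneEmbedding.IsFace {V : Type u} {G : SimpleGraph V} (E : PlaneEmbedding G)
    (F : Set (ℝ × ℝ)) : Prop :=
  ∃ p, p ∉ E.drawing ∧ F = connectedComponentIn E.drawingᶜ p

/-- A vertex is incident to a face if its point lies on the boundary of the face. -/
def PlaneEmbedding.VertexOnFace {V : Type u} {G : SimpleGraph V} (E : PlaneEmbedding G)
    (v : V) (F : Set (ℝ × ℝ)) : Prop :=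
  E.pos v ∈ closure F

/-- Maximum degree at most `d`. -/
def SimpleGraph.MaxDegreeLE {V : Type u} (G : SimpleGraph V) (d : ℕ) : Prop :=
  ∀ v : V, (G.neighborSet v).ncard ≤ d

/-- A graph is triconnected (3-connected) if it has more than three vertices, is
connected, and stays connected after removing any two vertices. -/
def SimpleGraph.IsTriconnected {V : Type u} (G : SimpleGraph V) : Prop :=
  3 < Nat.card V ∧ G.Connected ∧
    ∀ u v : V, (G.induce {w : V | w ≠ u ∧ w ≠ v}).Connected

/-- A graph is biconnected (2-connected) if it has more than two vertices, is
connected, and stays connected after removing any single vertex. -/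
def SimpleGraph.IsBiconnected {V : Type u} (G : SimpleGraph V) : Prop :=
  2 < Nat.card V ∧ G.Connected ∧ ∀ u : V, (G.induce {w : V | w ≠ u}).Connected

/-- A graph is subhamiltonian if it is a spanning subgraph of a planar hamiltonian graph. -/
def SimpleGraph.IsSubhamiltonian {V : Type u} [Fintype V] (G : SimpleGraph V) : Prop :=
  ∃ H : SimpleGraph V, G ≤ H ∧ H.IsPlanar ∧ (letI := Classical.decEq V; H.IsHamiltonian)

/-- The graph consisting of the edges of the cyclic vertex sequence `σ`. -/
def cyclicSuccGraph {W : Type u} (σ : ZMod (Nat.card W) ≃ W) : SimpleGraph W :=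
  SimpleGraph.fromRel fun u v => ∃ i, u = σ i ∧ v = σ (i + 1)

/-- The cyclic ordering `σ` of all vertices of `G` is a subhamiltonian cycle for `G` if
adding the edges between consecutive vertices of `σ` keeps the graph planar. -/
def SimpleGraph.IsSubhamiltonianCycle {W : Type u} (G : SimpleGraph W)
    (σ : ZMod (Nat.card W) ≃ W) : Prop :=
  SimpleGraph.IsPlanar (G ⊔ cyclicSuccGraph σ)

/-- The edges (pairs of consecutive vertices) of the cyclic sequence `σ`. -/
def cycleEdges {W : Type u} (σ : ZMod (Nat.card W) ≃ W) : Set (Sym2 W) :=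
  {e | ∃ i, e = s(σ i, σ (i + 1))}

/-- The subhamiltonian cycle `σ` crosses the face `F` at position `i` if the two
consecutive vertices `σ i` and `σ (i+1)` are both incident to `F` but not adjacent. -/
def CrossesFaceAt {V : Type u} {G : SimpleGraph V} (E : PlaneEmbedding G)
    (σ : ZMod (Nat.card V) ≃ V) (F : Set (ℝ × ℝ)) (i : ZMod (Nat.card V)) : Prop :=
  E.VertexOnFace (σ i) F ∧ E.VertexOnFace (σ (i + 1)) F ∧ ¬ G.Adj (σ i) (σ (i + 1))

/-- A separating triangle: a triangle whose removal disconnects the graph. -/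
def SimpleGraph.IsSepTriangle {V : Type u} (G : SimpleGraph V) (a b c : V) : Prop :=
  G.Adj a b ∧ G.Adj b c ∧ G.Adj a c ∧
    ¬ (G.induce {v : V | v ≠ a ∧ v ≠ b ∧ v ≠ c}).Connected

section Triangle

variable {V : Type u} {G : SimpleGraph V} (E : PlaneEmbedding G) {a b c : V}

/-- The Jordan curve formed by the drawing of the triangle `a b c`. -/
def triangleDrawing (hab : G.Adj a b) (hbc : G.Adj b c) (hac : G.Adj a c) :
    Set (ℝ × ℝ) :=
  E.arc hab ∪ E.arc hbc ∪ E.arc hac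

/-- The vertices strictly inside the triangle `a b c` (bounded side of the Jordan curve). -/
def insideTriangle (hab : G.Adj a b) (hbc : G.Adj b c) (hac : G.Adj a c) : Set V :=
  {v | v ≠ a ∧ v ≠ b ∧ v ≠ c ∧
    Bornology.IsBounded
      (connectedComponentIn (triangleDrawing E hab hbc hac)ᶜ (E.pos v))}

/-- The vertices strictly outside the triangle `a b c` (unbounded side of the Jordan curve). -/
def outsideTriangle (hab : G.Adj a b) (hbc : G.Adj b c) (hac : G.Adj a c) : Set V :=
  {v | v ≠ a ∧ v ≠ b ∧ v ≠ c ∧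
    ¬ Bornology.IsBounded
      (connectedComponentIn (triangleDrawing E hab hbc hac)ᶜ (E.pos v))}

end Triangle

section ClosedTriangle

variable {V : Type u} {G : SimpleGraph V} (E : PlaneEmbedding G) {a b c : V}

/-- The subgraph of `G` induced by the triangle together with all vertices inside it
is `G.induce (closedInsideTriangle E hab hbc hac)`. -/
def closedInsideTriangle (hab : G.Adj a b) (hbc : G.Adj b c) (hac : G.Adj a c) :
    Set V :=
  insideTriangle E hab hbc hac ∪ {a, b, c}

/-- The subgraph of `G` induced by the triangle together with all vertices outside it
is `G.induce (closedOutsideTriangle E hab hbc hac)`. -/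
def closedOutsideTriangle (hab : G.Adj a b) (hbc : G.Adj b c) (hac : G.Adj a c) :
    Set V :=
  outsideTriangle E hab hbc hac ∪ {a, b, c}

end ClosedTriangle

/-!
Let `e = xy`, `ein = xz` and `eout = yz`. Each of the two cycles misses an edge of the triangle, so
there are vertices on both sides of it; by triconnectivity and the degree bound, each of `x` and `y`
then has exactly one neighbour strictly inside and one strictly outside.

Add the cycle edges to the closed inside. Both cycle edges at `x` are edges of the triangle, so
`x` still has degree three there, with neighbours `y`, `z` and `i`. Hence `y` and `z` are
consecutive around `x` on the side not containing the edge `xi`, and `yz` can be redrawn alongside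
`y`, `x`, `z`, which makes `xyz` an empty triangle, with straight sides after pulling `y` and `z`
close to `x`. The same holds for the closed outside with `y` in the role of `x`. Turning one
drawing inside out places it in the empty triangle of the other, so the union of the two augmented
graphs is planar.

Its Hamiltonian cycle consists of the inside path from `y` to `z` that avoids `x`, the outside path
from `z` to `x` that avoids `y`, and the edge `xy`.
-/

/-! ### Simple arcs -/

section Arcs

variable {X Y : Type*} [TopologicalSpace X] [TopologicalSpace Y] {p q e : X} {S T : Set X}

/-- `S` is a simple arc from `p` to `q`: the range of an injective path. -/
def IsArc (p q : X) (S : Set X) : Prop :=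
  ∃ γ : Path p q, Function.Injective γ ∧ range γ = S

lemma isArc_of_continuousOn {f : ℝ → X} (hf : ContinuousOn f (Icc 0 1)) (hinj : InjOn f (Icc 0 1)) :
    IsArc (f 0) (f 1) (f '' Icc 0 1) := by
  refine ⟨⟨⟨fun t : unitInterval => f t, hf.domRestrict⟩, rfl, rfl⟩, ?_, ?_⟩
  · exact fun s t hst => Subtype.ext (hinj s.2 t.2 hst)
  · exact (image_eq_range f (Icc 0 1)).symm

namespace IsArc

lemma exists_continuousOn (h : IsArc p q S) :
    ∃ f : ℝ → X, ContinuousOn f (Icc 0 1) ∧ InjOn f (Icc 0 1) ∧ f 0 = p ∧ f 1 = q ∧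
      f '' Icc 0 1 = S := by
  obtain ⟨γ, hinj, rfl⟩ := h
  refine ⟨γ.extend, γ.continuous_extend.continuousOn, ?_, by simp, by simp, ?_⟩
  · intro s hs t ht hst
    rw [γ.extend_apply hs, γ.extend_apply ht] at hst
    exact congrArg Subtype.val (hinj hst)
  · rw [image_eq_range]
    congr 1
    exact funext fun t => γ.extend_apply t.2

lemma symm (h : IsArc p q S) : IsArc q p S := by
  obtain ⟨γ, hinj, rfl⟩ := h
  exact ⟨γ.symm, hinj.comp unitInterval.symm_bijective.injective, γ.symm_range⟩

lemma isCompact (h : IsArc p q S) : IsCompact S := by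
  obtain ⟨γ, -, rfl⟩ := h
  exact isCompact_range γ.continuous

lemma isPreconnected (h : IsArc p q S) : IsPreconnected S := by
  obtain ⟨γ, -, rfl⟩ := h
  exact isPreconnected_range γ.continuous

lemma left_mem (h : IsArc p q S) : p ∈ S := by
  obtain ⟨γ, -, rfl⟩ := h
  exact ⟨0, γ.source⟩

lemma right_mem (h : IsArc p q S) : q ∈ S := h.symm.left_mem

lemma image (h : IsArc p q S) {φ : X → Y} (hφ : ContinuousOn φ S) (hinj : InjOn φ S) :
    IsArc (φ p) (φ q) (φ '' S) := by
  obtain ⟨γ, hγ, rfl⟩ := h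
  refine ⟨γ.map' hφ, fun s t hst => hγ (hinj (mem_range_self s) (mem_range_self t) hst), ?_⟩
  exact range_comp φ γ

end IsArc

lemma isArc_image_Icc {γ : Path p q} (hγ : Function.Injective γ) {s : unitInterval} (hs : 0 < s) :
    IsArc p (γ s) (γ '' Icc 0 s) := by
  have hne : (s : ℝ) ≠ 0 := fun h => hs.ne' (Subtype.ext h)
  refine ⟨(γ.subpath 0 s).cast γ.source.symm rfl, fun t u htu => ?_, ?_⟩
  · have h := congrArg Subtype.val (hγ htu)
    simpa [Icc.convexComb, hne, Subtype.ext_iff] using h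
  · exact γ.range_subpath_of_le 0 s hs.le

lemma injective_trans {γ : Path p e} {δ : Path e q} (hγ : Function.Injective γ)
    (hδ : Function.Injective δ) (h : range γ ∩ range δ ⊆ {e}) :
    Function.Injective (γ.trans δ) := by
  have meet {a b : unitInterval} (hab : γ a = δ b) : b = 0 := by
    have he : γ a = e := h ⟨mem_range_self a, hab ▸ mem_range_self b⟩
    exact hδ ((hab.symm.trans he).trans δ.source.symm)
  intro s t hst
  simp only [Path.trans_apply] at hst
  split_ifs at hst with hs ht ht
  · have := congrArg Subtype.val (hγ hst)
    exact Subtype.ext (by simpa using this)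
  · have := congrArg Subtype.val (meet hst)
    simp only [Icc.coe_zero] at this
    linarith
  · have := congrArg Subtype.val (meet hst.symm)
    simp only [Icc.coe_zero] at this
    linarith
  · have := congrArg Subtype.val (hδ hst)
    simp only at this
    exact Subtype.ext (by linarith)

lemma IsArc.union (hS : IsArc p e S) (hT : IsArc e q T) (h : S ∩ T ⊆ {e}) :
    IsArc p q (S ∪ T) := by
  obtain ⟨γ, hγ, rfl⟩ := hS
  obtain ⟨δ, hδ, rfl⟩ := hT
  exact ⟨γ.trans δ, injective_trans hγ hδ h, γ.trans_range δ⟩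

lemma exists_first_hit (γ : Path p q) {A : Set X} (hA : IsClosed A) (hp : p ∉ A) {t : unitInterval}
    (ht : γ t ∈ A) : ∃ s ≤ t, 0 < s ∧ γ s ∈ frontier A ∧ ∀ u < s, γ u ∉ A := by
  obtain ⟨s, hs, hmin⟩ := (hA.preimage γ.continuous).isCompact.exists_isLeast ⟨t, ht⟩
  have hs0 : 0 < s := by
    refine unitInterval.pos_iff_ne_zero.2 ?_
    rintro rfl
    exact hp (γ.source ▸ hs)
  have hlt : ∀ u < s, γ u ∉ A := fun u hu hmem => hu.not_ge (hmin hmem)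
  refine ⟨s, hmin ht, hs0, ⟨subset_closure hs, fun hint => ?_⟩, hlt⟩
  have hnhds : γ ⁻¹' interior A ∈ nhdsWithin s (Iio s) :=
    mem_nhdsWithin_of_mem_nhds ((isOpen_interior.preimage γ.continuous).mem_nhds hint)
  have : (nhdsWithin s (Iio s)).NeBot := nhdsLT_neBot_of_exists_lt ⟨0, hs0⟩
  obtain ⟨u, hu, hus⟩ := Filter.nonempty_of_mem (Filter.inter_mem hnhds self_mem_nhdsWithin)
  exact hlt u hus (interior_subset hu)

end Arcs

section Segments

variable {E : Type*} [NormedAddCommGroup E] [NormedSpace ℝ E]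

lemma isArc_segment {p q : E} (h : p ≠ q) : IsArc p q (segment ℝ p q) :=
  ⟨.segment p q, Path.segment_injective_of_ne h, Path.range_segment p q⟩

lemma isArc_segment_union {p e q : E} {T : Set E} (hT : IsArc e q T)
    (h : segment ℝ p e ∩ T ⊆ {e}) : IsArc p q (segment ℝ p e ∪ T) := by
  rcases eq_or_ne p e with rfl | hpe
  · rwa [segment_same, singleton_union, insert_eq_of_mem hT.left_mem]
  · exact (isArc_segment hpe).union hT h

lemma notMem_segment_of_mem_sphere [StrictConvexSpace ℝ E] {c p e e' : E} {r : ℝ}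
    (hp : p ∈ Metric.closedBall c r) (he : e ∈ Metric.sphere c r) (he' : e' ∈ Metric.sphere c r)
    (hne : e' ≠ e) (hpe' : e' ≠ p) : e' ∉ segment ℝ p e := by
  intro h
  have hpe : p ≠ e := by
    rintro rfl
    exact hpe' (by simpa using h)
  have hball := openSegment_subset_ball_of_ne hp (Metric.sphere_subset_closedBall he) hpe
    (mem_openSegment_of_ne_left_right hpe'.symm hne.symm h)
  exact (Metric.mem_ball.1 hball).ne he'

lemma segment_inter_segment_of_mem_sphere [StrictConvexSpace ℝ E] {c p e e' : E} {r : ℝ}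
    (hp : p ∈ Metric.closedBall c r) (he : e ∈ Metric.sphere c r) (he' : e' ∈ Metric.sphere c r)
    (hne : e ≠ e') : segment ℝ p e ∩ segment ℝ p e' ⊆ {p} := by
  rintro t ⟨ht, ht'⟩
  by_contra htp
  have ne_of_mem {f : E} (hf : t ∈ segment ℝ p f) : f ≠ p := by
    rintro rfl
    exact htp (by simpa using hf)
  have ray {f : E} (hf : t ∈ segment ℝ p f) : SameRay ℝ (t -ᵥ p) (f -ᵥ p) :=
    (mem_segment_iff_wbtw.1 hf).sameRay_vsub_left
  have hray : SameRay ℝ (e -ᵥ p) (e' -ᵥ p) :=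
    (ray ht).symm.trans (ray ht') fun h => absurd (vsub_eq_zero_iff_eq.1 h) htp
  rcases wbtw_total_of_sameRay_vsub_left hray with h | h
  · exact notMem_segment_of_mem_sphere hp he' he hne (ne_of_mem ht) (mem_segment_iff_wbtw.2 h)
  · exact notMem_segment_of_mem_sphere hp he he' hne.symm (ne_of_mem ht')
      (mem_segment_iff_wbtw.2 h)

end Segments

/-! ### Drawings of a graph in the complex plane -/

/-- A drawing without crossings of the graph `G`, whose edges all lie in `S`, with the vertices of
`S` as its points. Unlike in `PlaneEmbedding`, the arcs are indexed by all unordered pairs, so that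
edges can be redrawn one at a time; the values of `pos` outside `S` and of `arc` at non-edges are
junk. -/
structure PlaneDrawing {V : Type u} (G : SimpleGraph V) (S : Set V) where
  pos : V → ℂ
  arc : Sym2 V → Set ℂ
  adj_mem : ∀ {a b}, G.Adj a b → a ∈ S
  injOn_pos : InjOn pos S
  isArc : ∀ {a b}, G.Adj a b → IsArc (pos a) (pos b) (arc s(a, b))
  arc_inter_arc : ∀ {e f}, e ∈ G.edgeSet → f ∈ G.edgeSet → e ≠ f → arc e ∩ arc f ⊆ pos '' S
  mem_of_pos_mem_arc : ∀ {e w}, e ∈ G.edgeSet → w ∈ S → pos w ∈ arc e → w ∈ e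

namespace PlaneDrawing

variable {V : Type u} {G : SimpleGraph V} {S : Set V} (D : PlaneDrawing G S)

lemma mem_of_mem_edge (D : PlaneDrawing G S) {e : Sym2 V} (he : e ∈ G.edgeSet) {w : V}
    (hw : w ∈ e) : w ∈ S := by
  obtain ⟨u, rfl⟩ := hw
  exact D.adj_mem he

lemma exists_common_end {e f : Sym2 V} (he : e ∈ G.edgeSet) (hf : f ∈ G.edgeSet) (hne : e ≠ f)
    {p : ℂ} (hpe : p ∈ D.arc e) (hpf : p ∈ D.arc f) : ∃ k, k ∈ e ∧ k ∈ f ∧ D.pos k = p := by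
  obtain ⟨k, hk, rfl⟩ := D.arc_inter_arc he hf hne ⟨hpe, hpf⟩
  exact ⟨k, D.mem_of_pos_mem_arc he hk hpe, D.mem_of_pos_mem_arc hf hk hpf, rfl⟩

lemma isCompact_arc {e : Sym2 V} (he : e ∈ G.edgeSet) : IsCompact (D.arc e) := by
  induction e with | h a b => exact (D.isArc he).isCompact

/-- The points of the plane covered by the vertices in `A` and the arcs indexed by `F`. -/
def part (A : Set V) (F : Set (Sym2 V)) : Set ℂ :=
  D.pos '' A ∪ ⋃ e ∈ F, D.arc e

variable {D} in
lemma pos_mem_part {A : Set V} {F : Set (Sym2 V)} {w : V} (hw : w ∈ A) :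
    D.pos w ∈ D.part A F :=
  Or.inl ⟨w, hw, rfl⟩

variable {D} in
lemma arc_subset_part {A : Set V} {F : Set (Sym2 V)} {e : Sym2 V} (he : e ∈ F) :
    D.arc e ⊆ D.part A F :=
  fun _ hp => Or.inr (mem_iUnion₂_of_mem he hp)

lemma mem_part {A : Set V} {F : Set (Sym2 V)} {p : ℂ} :
    p ∈ D.part A F ↔ (∃ w ∈ A, D.pos w = p) ∨ ∃ e ∈ F, p ∈ D.arc e := by
  simp [part]

lemma isClosed_part [Finite V] (A : Set V) {F : Set (Sym2 V)} (hF : F ⊆ G.edgeSet) :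
    IsClosed (D.part A F) :=
  (A.toFinite.image _).isClosed.union
    (F.toFinite.isClosed_biUnion fun _ he => (D.isCompact_arc (hF he)).isClosed)

/-- The drawing transported by a map that is injective and continuous on it. -/
def image (φ : ℂ → ℂ) (hφ : ContinuousOn φ (D.part S G.edgeSet))
    (hinj : InjOn φ (D.part S G.edgeSet)) : PlaneDrawing G S where
  pos := φ ∘ D.pos
  arc e := φ '' D.arc e
  adj_mem := D.adj_mem
  injOn_pos := hinj.comp D.injOn_pos fun _ => pos_mem_part
  isArc h := (D.isArc h).image (hφ.mono (arc_subset_part h)) (hinj.mono (arc_subset_part h))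
  arc_inter_arc he hf hne := by
    rw [← hinj.image_inter (arc_subset_part he) (arc_subset_part hf), image_comp]
    exact image_mono (D.arc_inter_arc he hf hne)
  mem_of_pos_mem_arc he hw h :=
    D.mem_of_pos_mem_arc he hw
      ((hinj.mem_image_iff (arc_subset_part he) (pos_mem_part hw)).1 h)

/-- The drawing restricted to a subgraph. -/
def mono {G' : SimpleGraph V} (h : G' ≤ G) : PlaneDrawing G' S where
  pos := D.pos
  arc := D.arc
  adj_mem hab := D.adj_mem (h hab)
  injOn_pos := D.injOn_pos
  isArc hab := D.isArc (h hab)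
  arc_inter_arc he hf := D.arc_inter_arc (SimpleGraph.edgeSet_mono h he)
    (SimpleGraph.edgeSet_mono h hf)
  mem_of_pos_mem_arc he := D.mem_of_pos_mem_arc (SimpleGraph.edgeSet_mono h he)

/-- The part of the drawing that is left when `v` and the edges at `v` are removed. -/
def rest (v : V) : Set ℂ :=
  D.part (S \ {v}) (G.edgeSet \ {e | v ∈ e})

lemma isClosed_rest [Finite V] (v : V) : IsClosed (D.rest v) :=
  D.isClosed_part _ sdiff_subset

lemma pos_notMem_rest {v : V} (hv : v ∈ S) : D.pos v ∉ D.rest v := by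
  rw [rest, mem_part]
  rintro (⟨w, ⟨hw, hwv⟩, h⟩ | ⟨e, ⟨he, hve⟩, h⟩)
  · exact hwv (D.injOn_pos hw hv h)
  · exact hve (D.mem_of_pos_mem_arc he hv h)

lemma notMem_rest_of_mem_arc {x v : V} (h : G.Adj x v) {p : ℂ} (hp : p ∈ D.arc s(x, v))
    (hpx : p ≠ D.pos x) : p ∉ D.rest v := by
  have eq_of_mem {k : V} (hk : k ∈ s(x, v)) (hkp : D.pos k = p) : k = v :=
    (Sym2.mem_iff.1 hk).resolve_left (by rintro rfl; exact hpx hkp.symm)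
  rw [rest, mem_part]
  rintro (⟨w, ⟨hw, hwv⟩, rfl⟩ | ⟨e, ⟨he, hve⟩, hpe⟩)
  · exact hwv (eq_of_mem (D.mem_of_pos_mem_arc h hw hp) rfl)
  · have hne : s(x, v) ≠ e := by
      rintro rfl
      exact hve (Sym2.mem_mk_right x v)
    obtain ⟨k, hk, hke, hkp⟩ := D.exists_common_end h he hne hp hpe
    exact hve (eq_of_mem hk hkp ▸ hke)

lemma rest_congr {D D' : PlaneDrawing G S} {v : V} (hpos : ∀ w, w ≠ v → D'.pos w = D.pos w)
    (harc : ∀ e, v ∉ e → D'.arc e = D.arc e) : D'.rest v = D.rest v := by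
  ext p
  simp only [rest, mem_part]
  refine or_congr (exists_congr fun w => and_congr_right fun hw => ?_)
    (exists_congr fun e => and_congr_right fun he => ?_)
  · rw [hpos w hw.2]
  · rw [harc e he.2]

/-- `T` is the part beyond `q` of the edge `v w`, where `q` is the point at which that edge, coming
from `v`, leaves the disc of radius `r` about `v` for good. -/
structure IsTail (v w : V) (r : ℝ) (q : ℂ) (T : Set ℂ) : Prop where
  mem_sphere : q ∈ Metric.sphere (D.pos v) r
  isArc : IsArc q (D.pos w) T
  subset : T ⊆ D.arc s(v, w)
  inter_closedBall : T ∩ Metric.closedBall (D.pos v) r ⊆ {q}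

lemma IsTail.pos_notMem {D : PlaneDrawing G S} {v w : V} {r : ℝ} {q : ℂ} {T : Set ℂ} (hr : 0 < r)
    (h : D.IsTail v w r q T) : D.pos v ∉ T := by
  intro hv
  have hq : D.pos v = q := h.inter_closedBall ⟨hv, Metric.mem_closedBall_self hr.le⟩
  exact hr.ne (by simpa [← hq] using h.mem_sphere)

lemma IsTail.disjoint {D : PlaneDrawing G S} {v w w' : V} {r : ℝ} {q q' : ℂ} {T T' : Set ℂ}
    (hr : 0 < r) (h : D.IsTail v w r q T) (h' : D.IsTail v w' r q' T') (hw : G.Adj v w)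
    (hw' : G.Adj v w') (hne : w ≠ w') : Disjoint T T' := by
  rw [Set.disjoint_left]
  intro p hp hp'
  have hne' : s(v, w) ≠ s(v, w') := fun h => hne (Sym2.congr_right.1 h)
  obtain ⟨k, hk, hk', rfl⟩ := D.exists_common_end hw hw' hne' (h.subset hp) (h'.subset hp')
  rcases Sym2.mem_iff.1 hk with rfl | rfl
  · exact h.pos_notMem hr hp
  · rcases Sym2.mem_iff.1 hk' with rfl | rfl
    · exact h.pos_notMem hr hp
    · exact hne rfl

lemma IsTail.ne {D : PlaneDrawing G S} {v w w' : V} {r : ℝ} {q q' : ℂ} {T T' : Set ℂ}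
    (hr : 0 < r) (h : D.IsTail v w r q T) (h' : D.IsTail v w' r q' T') (hw : G.Adj v w)
    (hw' : G.Adj v w') (hne : w ≠ w') : q ≠ q' :=
  (h.disjoint hr h' hw hw' hne).ne_of_mem h.isArc.left_mem h'.isArc.left_mem

lemma IsTail.segment_subset {D : PlaneDrawing G S} {v w : V} {r : ℝ} {p q : ℂ} {T : Set ℂ}
    (h : D.IsTail v w r q T) (hp : p ∈ Metric.closedBall (D.pos v) r) :
    segment ℝ p q ⊆ Metric.closedBall (D.pos v) r :=
  (convex_closedBall _ _).segment_subset hp (Metric.sphere_subset_closedBall h.mem_sphere)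

lemma exists_isTail {v w : V} (h : G.Adj v w) {r : ℝ} (hr : 0 < r)
    (hrest : Disjoint (Metric.closedBall (D.pos v) r) (D.rest v)) :
    ∃ q T, D.IsTail v w r q T := by
  obtain ⟨γ, hγ, hrange⟩ := (D.isArc h).symm
  have hw : D.pos w ∉ Metric.closedBall (D.pos v) r := fun hm =>
    hrest.notMem_of_mem_left hm (pos_mem_part ⟨D.adj_mem h.symm, h.ne'⟩)
  obtain ⟨s, -, hs0, hs, hlt⟩ := exists_first_hit γ Metric.isClosed_closedBall hw (t := 1)
    (by rw [γ.target]; exact Metric.mem_closedBall_self hr.le)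
  refine ⟨γ s, γ '' Icc 0 s, Metric.frontier_closedBall_subset_sphere hs,
    (isArc_image_Icc hγ hs0).symm, hrange ▸ image_subset_range _ _, ?_⟩
  rintro _ ⟨⟨t, ht, rfl⟩, hmem⟩
  rcases ht.2.eq_or_lt with rfl | hts
  · rfl
  · exact absurd hmem (hlt t hts)

/-- A family indexed by the neighbours of `v`, reindexed by the edges at `v`. -/
noncomputable def edgeIndexed {V α : Type*} [Inhabited α] (v : V) (f : V → α) : Sym2 V → α :=
  Function.extend (fun w => s(v, w)) f default

lemma edgeIndexed_mk {V α : Type*} [Inhabited α] (v : V) (f : V → α) (w : V) :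
    edgeIndexed v f s(v, w) = f w :=
  Function.Injective.extend_apply (fun _ _ => Sym2.congr_right.1) _ _ _

section Redraw

variable [DecidableEq V] {D} {v : V} {r : ℝ} {q : Sym2 V → ℂ} {T : Sym2 V → Set ℂ} {p : ℂ}

/-- The arcs of `redraw`: an edge `e` at `v` becomes the segment from `p` to the exit point `q e`,
followed by the tail `T e`. -/
def redrawArc (D : PlaneDrawing G S) (v : V) (q : Sym2 V → ℂ) (T : Sym2 V → Set ℂ)
    (p : ℂ) (e : Sym2 V) : Set ℂ :=
  if v ∈ e then segment ℝ p (q e) ∪ T e else D.arc e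

lemma redrawArc_of_mem {e : Sym2 V} (h : v ∈ e) :
    D.redrawArc v q T p e = segment ℝ p (q e) ∪ T e :=
  if_pos h

lemma redrawArc_of_notMem {e : Sym2 V} (h : v ∉ e) : D.redrawArc v q T p e = D.arc e :=
  if_neg h

lemma redrawArc_inter_redrawArc (hr : 0 < r)
    (hT : ∀ w, G.Adj v w → D.IsTail v w r (q s(v, w)) (T s(v, w)))
    (hp : p ∈ Metric.closedBall (D.pos v) r) {e f : Sym2 V} (he : e ∈ G.edgeSet)
    (hf : f ∈ G.edgeSet) (hve : v ∈ e) (hvf : v ∈ f) (hne : e ≠ f) :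
    D.redrawArc v q T p e ∩ D.redrawArc v q T p f ⊆ {p} := by
  obtain ⟨a, rfl⟩ := hve
  obtain ⟨b, rfl⟩ := hvf
  have hab : a ≠ b := fun h => hne (by rw [h])
  have hchord := segment_inter_segment_of_mem_sphere hp (hT a he).mem_sphere
    (hT b hf).mem_sphere ((hT a he).ne hr (hT b hf) he hf hab)
  rw [redrawArc_of_mem (Sym2.mem_mk_left v a), redrawArc_of_mem (Sym2.mem_mk_left v b)]
  rintro z ⟨hz | hz, hz' | hz'⟩
  · exact hchord ⟨hz, hz'⟩
  · have hzq := (hT b hf).inter_closedBall ⟨hz', (hT a he).segment_subset hp hz⟩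
    exact hchord ⟨hz, hzq ▸ right_mem_segment ℝ p _⟩
  · have hzq := (hT a he).inter_closedBall ⟨hz, (hT b hf).segment_subset hp hz'⟩
    exact hchord ⟨hzq ▸ right_mem_segment ℝ p _, hz'⟩
  · exact absurd hz' (((hT a he).disjoint hr (hT b hf) he hf hab).notMem_of_mem_left hz)

lemma redrawArc_inter_subset (hrest : Disjoint (Metric.closedBall (D.pos v) r) (D.rest v))
    (hT : ∀ w, G.Adj v w → D.IsTail v w r (q s(v, w)) (T s(v, w)))
    (hp : p ∈ Metric.closedBall (D.pos v) r) {e : Sym2 V} (he : e ∈ G.edgeSet) (hve : v ∈ e) :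
    D.redrawArc v q T p e ∩ D.rest v ⊆ D.arc e := by
  obtain ⟨a, rfl⟩ := hve
  rw [redrawArc_of_mem (Sym2.mem_mk_left v a)]
  rintro z ⟨hz | hz, hz'⟩
  · exact absurd hz' (hrest.notMem_of_mem_left ((hT a he).segment_subset hp hz))
  · exact (hT a he).subset hz

lemma isArc_redrawArc (hT : ∀ w, G.Adj v w → D.IsTail v w r (q s(v, w)) (T s(v, w)))
    (hp : p ∈ Metric.closedBall (D.pos v) r) {w : V} (hw : G.Adj v w) :
    IsArc p (D.pos w) (D.redrawArc v q T p s(v, w)) := by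
  rw [redrawArc_of_mem (Sym2.mem_mk_left v w)]
  exact isArc_segment_union (hT w hw).isArc fun z hz =>
    (hT w hw).inter_closedBall ⟨hz.2, (hT w hw).segment_subset hp hz.1⟩

lemma injOn_update_pos (hrest : Disjoint (Metric.closedBall (D.pos v) r) (D.rest v))
    (hp : p ∈ Metric.closedBall (D.pos v) r) : InjOn (Function.update D.pos v p) S := by
  have hne {a : V} (ha : a ∈ S) (hav : a ≠ v) : D.pos a ≠ p := fun h =>
    hrest.notMem_of_mem_left hp (h ▸ pos_mem_part ⟨ha, hav⟩)
  intro a ha b hb hab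
  by_cases hav : a = v <;> by_cases hbv : b = v
  · rw [hav, hbv]
  · simp only [hav, Function.update_self, Function.update_of_ne hbv] at hab
    exact absurd hab.symm (hne hb hbv)
  · simp only [hbv, Function.update_self, Function.update_of_ne hav] at hab
    exact absurd hab (hne ha hav)
  · simp only [Function.update_of_ne hav, Function.update_of_ne hbv] at hab
    exact D.injOn_pos ha hb hab

lemma redrawArc_inter_redrawArc_subset_image (hv : v ∈ S) (hr : 0 < r)
    (hrest : Disjoint (Metric.closedBall (D.pos v) r) (D.rest v))
    (hT : ∀ w, G.Adj v w → D.IsTail v w r (q s(v, w)) (T s(v, w)))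
    (hp : p ∈ Metric.closedBall (D.pos v) r) {e f : Sym2 V} (he : e ∈ G.edgeSet)
    (hf : f ∈ G.edgeSet) (hne : e ≠ f) :
    D.redrawArc v q T p e ∩ D.redrawArc v q T p f ⊆ Function.update D.pos v p '' S := by
  have at_other {e f : Sym2 V} (he : e ∈ G.edgeSet) (hf : f ∈ G.edgeSet) (hne : e ≠ f)
      (hvf : v ∉ f) {z : ℂ} (hz : z ∈ D.arc e) (hz' : z ∈ D.arc f) :
      z ∈ Function.update D.pos v p '' S := by
    obtain ⟨k, -, hk, rfl⟩ := D.exists_common_end he hf hne hz hz'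
    refine ⟨k, D.mem_of_mem_edge hf hk, Function.update_of_ne ?_ _ _⟩
    rintro rfl
    exact hvf hk
  have mem_arc {e f : Sym2 V} (he : e ∈ G.edgeSet) (hf : f ∈ G.edgeSet) (hvf : v ∉ f)
      {z : ℂ} (hz : z ∈ D.redrawArc v q T p e) (hz' : z ∈ D.arc f) : z ∈ D.arc e := by
    by_cases hve : v ∈ e
    · exact redrawArc_inter_subset hrest hT hp he hve
        ⟨hz, arc_subset_part (mem_sdiff_of_mem hf hvf) hz'⟩
    · rwa [redrawArc_of_notMem hve] at hz
  rintro z ⟨hz, hz'⟩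
  by_cases hvf : v ∈ f
  · by_cases hve : v ∈ e
    · exact ⟨v, hv, (Function.update_self ..).trans
        (redrawArc_inter_redrawArc hr hT hp he hf hve hvf hne ⟨hz, hz'⟩).symm⟩
    · rw [redrawArc_of_notMem hve] at hz
      exact at_other hf he hne.symm hve (mem_arc hf he hve hz' hz) hz
  · rw [redrawArc_of_notMem hvf] at hz'
    exact at_other he hf hne hvf (mem_arc he hf hvf hz hz') hz'

/-- The drawing in which `v` has been moved to the point `p` of a disc about `v` that meets no other
part of the drawing, while the edges at `v` are redrawn inside the disc as straight segments from
`p` to their exit points. -/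
def redraw (hv : v ∈ S) (hr : 0 < r)
    (hrest : Disjoint (Metric.closedBall (D.pos v) r) (D.rest v))
    (hT : ∀ w, G.Adj v w → D.IsTail v w r (q s(v, w)) (T s(v, w)))
    (hp : p ∈ Metric.closedBall (D.pos v) r) : PlaneDrawing G S where
  pos := Function.update D.pos v p
  arc := D.redrawArc v q T p
  adj_mem := D.adj_mem
  injOn_pos := injOn_update_pos hrest hp
  isArc {a b} hab := by
    by_cases hav : a = v
    · subst hav
      rw [Function.update_self, Function.update_of_ne hab.ne']
      exact isArc_redrawArc hT hp hab
    by_cases hbv : b = v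
    · subst hbv
      rw [Function.update_self, Function.update_of_ne hav, Sym2.eq_swap]
      exact (isArc_redrawArc hT hp hab.symm).symm
    · rw [Function.update_of_ne hav, Function.update_of_ne hbv,
        redrawArc_of_notMem (by simp [Ne.symm hav, Ne.symm hbv])]
      exact D.isArc hab
  arc_inter_arc := redrawArc_inter_redrawArc_subset_image hv hr hrest hT hp
  mem_of_pos_mem_arc {e w} he hw h := by
    by_cases hwv : w = v
    · subst hwv
      by_contra hve
      rw [Function.update_self, redrawArc_of_notMem hve] at h
      exact hrest.notMem_of_mem_left hp (arc_subset_part (mem_sdiff_of_mem he hve) h)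
    · rw [Function.update_of_ne hwv] at h
      by_cases hve : v ∈ e
      · exact D.mem_of_pos_mem_arc he hw
          (redrawArc_inter_subset hrest hT hp he hve ⟨h, pos_mem_part ⟨hw, hwv⟩⟩)
      · rw [redrawArc_of_notMem hve] at h
        exact D.mem_of_pos_mem_arc he hw h

end Redraw

end PlaneDrawing

/-! ### Pulling a vertex along an edge -/

namespace PlaneDrawing

variable {V : Type u} {G : SimpleGraph V} {S : Set V} [DecidableEq V]

/-- `D'` arises from `D` by pulling `y` back along its edge `x y`, traversed by `γ`, to the point
`γ t`, such that the other edges at `y` avoid `X`. -/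
structure IsPulled (D : PlaneDrawing G S) {x y : V} (γ : Path (D.pos x) (D.pos y))
    (t : unitInterval) (X : Set ℂ) (D' : PlaneDrawing G S) : Prop where
  pos_eq : D'.pos = Function.update D.pos y (γ t)
  arc_eq : D'.arc s(x, y) = γ '' Icc 0 t
  arc_of_notMem : ∀ e, y ∉ e → D'.arc e = D.arc e
  disjoint : ∀ w, G.Adj y w → w ≠ x → Disjoint (D'.arc s(y, w)) X

variable {D D' : PlaneDrawing G S} {x y : V} {γ : Path (D.pos x) (D.pos y)} {s t t₀ : unitInterval}
  {X : Set ℂ}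

namespace IsPulled

lemma rest_eq (h : D.IsPulled γ t X D') : D'.rest y = D.rest y :=
  rest_congr (fun w hw => by rw [h.pos_eq, Function.update_of_ne hw]) h.arc_of_notMem

lemma pos_self (h : D.IsPulled γ t X D') : D'.pos y = γ t := by
  rw [h.pos_eq, Function.update_self]

lemma isTail_arc (hxy : G.Adj x y) (hγ : Function.Injective γ) (h : D.IsPulled γ t X D')
    (hs : 0 < s) (hst : s ≤ t)
    (hfirst : ∀ u < s, γ u ∉ Metric.closedBall (γ t) (dist (γ s) (γ t))) :
    D'.IsTail y x (dist (γ s) (γ t)) (γ s) (γ '' Icc 0 s) where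
  mem_sphere := by rw [h.pos_self, Metric.mem_sphere]
  isArc := by
    rw [h.pos_eq, Function.update_of_ne hxy.ne]
    exact (isArc_image_Icc hγ hs).symm
  subset := by
    rw [Sym2.eq_swap, h.arc_eq]
    exact image_mono (Icc_subset_Icc_right hst)
  inter_closedBall := by
    rintro _ ⟨⟨u, hu, rfl⟩, hmem⟩
    rcases hu.2.eq_or_lt with rfl | hlt
    · rfl
    · exact absurd (h.pos_self ▸ hmem) (hfirst u hlt)

lemma step (hxy : G.Adj x y) (hγ : Function.Injective γ) (h : D.IsPulled γ t X D')
    (hs : 0 < s) (hst : s < t)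
    (hfirst : ∀ u < s, γ u ∉ Metric.closedBall (γ t) (dist (γ s) (γ t)))
    (hdisj : Disjoint (Metric.closedBall (γ t) (dist (γ s) (γ t))) (D.rest y ∪ X)) :
    ∃ D'', D.IsPulled γ s X D'' := by
  rw [disjoint_union_right] at hdisj
  set r := dist (γ s) (γ t)
  have hr : 0 < r := dist_pos.2 (hγ.ne hst.ne)
  have hrest : Disjoint (Metric.closedBall (D'.pos y) r) (D'.rest y) := by
    rw [h.rest_eq, h.pos_self]
    exact hdisj.1
  have hp : γ s ∈ Metric.closedBall (D'.pos y) r := by rw [h.pos_self, Metric.mem_closedBall]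
  choose! q₀ T₀ hqT₀ using fun w (hw : G.Adj y w) => D'.exists_isTail hw hr hrest
  set q := edgeIndexed y (Function.update q₀ x (γ s)) with hq
  set T := edgeIndexed y (Function.update T₀ x (γ '' Icc 0 s)) with hT_def
  have hqx : q s(y, x) = γ s := by rw [hq, edgeIndexed_mk, Function.update_self]
  have hTx : T s(y, x) = γ '' Icc 0 s := by rw [hT_def, edgeIndexed_mk, Function.update_self]
  have hT (w : V) (hw : G.Adj y w) : D'.IsTail y w r (q s(y, w)) (T s(y, w)) := by
    by_cases hwx : w = x
    · subst hwx
      rw [hqx, hTx]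
      exact h.isTail_arc hxy hγ hs hst.le hfirst
    · rw [hq, hT_def, edgeIndexed_mk, edgeIndexed_mk, Function.update_of_ne hwx,
        Function.update_of_ne hwx]
      exact hqT₀ w hw
  refine ⟨redraw (D.adj_mem hxy.symm) hr hrest hT hp, ?_, ?_, fun e he => ?_, fun w hw hwx => ?_⟩
  · simp only [redraw, h.pos_eq, Function.update_idem]
  · rw [Sym2.eq_swap]
    simp only [redraw, redrawArc_of_mem (Sym2.mem_mk_left y x), hqx, hTx, segment_same]
    exact union_eq_self_of_subset_left
      (singleton_subset_iff.2 (mem_image_of_mem γ (right_mem_Icc.2 hs.le)))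
  · exact (redrawArc_of_notMem he).trans (h.arc_of_notMem e he)
  · simp only [redraw, redrawArc_of_mem (Sym2.mem_mk_left y w), disjoint_union_left]
    refine ⟨hdisj.2.mono_left ?_, (h.disjoint w hw hwx).mono_left (hT w hw).subset⟩
    rw [← h.pos_self]
    exact (hT w hw).segment_subset hp

lemma exists_lt (hxy : G.Adj x y) (hγ : Function.Injective γ) (h : D.IsPulled γ t X D') {r : ℝ}
    (hr : 0 < r) (hdisj : Disjoint (Metric.closedBall (γ t) r) (D.rest y ∪ X)) :
    ∃ s, dist (γ s) (γ t) = r ∧ s < t ∧ γ s ∉ X ∧ ∃ D'', D.IsPulled γ s X D'' := by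
  have hx : D.pos x ∉ Metric.closedBall (γ t) r := fun hx =>
    hdisj.notMem_of_mem_left hx (Or.inl (pos_mem_part ⟨D.adj_mem hxy, hxy.ne⟩))
  obtain ⟨s, hst, hs, hfr, hfirst⟩ := exists_first_hit γ Metric.isClosed_closedBall hx
    (Metric.mem_closedBall_self hr.le)
  have hsr : dist (γ s) (γ t) = r := Metric.frontier_closedBall_subset_sphere hfr
  have hst : s < t := hst.lt_of_ne fun h => hr.ne (by rw [← hsr, h, dist_self])
  refine ⟨s, hsr, hst, fun hX => hdisj.notMem_of_mem_left hsr.le (Or.inr hX), ?_⟩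
  subst hsr
  exact h.step hxy hγ hs hst hfirst hdisj

lemma mono {Y : Set ℂ} (h : D.IsPulled γ t X D') (hYX : Y ⊆ X) : D.IsPulled γ t Y D' where
  __ := h
  disjoint w hw hwx := (h.disjoint w hw hwx).mono_right hYX

end IsPulled

omit [DecidableEq V] in
lemma notMem_rest_of_pos (hxy : G.Adj x y) (hγ : Function.Injective γ)
    (hrange : range γ = D.arc s(x, y)) (ht : 0 < t) : γ t ∉ D.rest y :=
  D.notMem_rest_of_mem_arc hxy (hrange ▸ mem_range_self t) fun h =>
    ht.ne' (hγ (h.trans γ.source.symm))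

lemma isPulled_one (hrange : range γ = D.arc s(x, y))
    (hX : ∀ w, G.Adj y w → w ≠ x → Disjoint (D.arc s(y, w)) X) : D.IsPulled γ 1 X D where
  pos_eq := by rw [γ.target, Function.update_eq_self]
  arc_eq := by rw [← hrange, ← image_univ, ← unitInterval.univ_eq_Icc]
  arc_of_notMem _ _ := rfl
  disjoint := hX

lemma exists_isPulled_le [Finite V] (hxy : G.Adj x y) (hγ : Function.Injective γ)
    (hrange : range γ = D.arc s(x, y)) (hX : IsClosed X)
    (hav : ∀ w, G.Adj y w → w ≠ x → Disjoint (D.arc s(y, w)) X) (ht₀ : 0 < t₀)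
    (hfar : ∀ t ≥ t₀, γ t ∉ X) : ∃ s ≤ t₀, γ s ∉ X ∧ ∃ D', D.IsPulled γ s X D' := by
  have hK : Disjoint (γ '' Icc t₀ 1) (D.rest y ∪ X) := disjoint_image_left.2 <|
    Set.disjoint_left.2 fun t ht => not_or_intro
      (notMem_rest_of_pos hxy hγ hrange (ht₀.trans_le ht.1)) (hfar t ht.1)
  obtain ⟨r, hr, hrK⟩ := hK.exists_cthickenings (isCompact_Icc.image γ.continuous)
    ((D.isClosed_rest y).union hX)
  have hball (t : unitInterval) (ht : t₀ ≤ t) :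
      Disjoint (Metric.closedBall (γ t) r) (D.rest y ∪ X) :=
    hrK.mono (Metric.closedBall_subset_cthickening (mem_image_of_mem γ (mem_Icc.2 ⟨ht, le_top⟩)) r)
      (Metric.self_subset_cthickening _)
  obtain ⟨η, hη, huc⟩ := Metric.uniformContinuous_iff.1
    (CompactSpace.uniformContinuous_of_continuous γ.continuous) r hr
  -- The modulus `η` of uniform continuity bounds from below what each pull takes off `t`.
  have hpull (n : ℕ) : ∃ s : unitInterval, (s ≤ t₀ ∨ (s : ℝ) ≤ 1 - n * η) ∧ γ s ∉ X ∧
      ∃ D', D.IsPulled γ s X D' := by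
    induction n with
    | zero => exact ⟨1, by simp, hfar 1 le_top, D, isPulled_one hrange hav⟩
    | succ n ih =>
      obtain ⟨t, ht, htX, D', hD'⟩ := ih
      rcases le_or_gt t t₀ with htt₀ | htt₀
      · exact ⟨t, Or.inl htt₀, htX, D', hD'⟩
      obtain ⟨s, hsr, hst, hsX, hs⟩ := hD'.exists_lt hxy hγ hr (hball t htt₀.le)
      have hdist : η ≤ dist s t := not_lt.1 fun h => (huc h).ne hsr
      rw [Subtype.dist_eq, Real.dist_eq, abs_sub_comm,
        abs_of_pos (sub_pos.2 (Subtype.coe_lt_coe.2 hst))] at hdist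
      have := ht.resolve_left htt₀.not_ge
      exact ⟨s, Or.inr (by push_cast; linarith), hsX, hs⟩
  obtain ⟨n, hn⟩ := exists_nat_ge (1 / η)
  obtain ⟨s, hs, hsX, hD'⟩ := hpull n
  have hs0 : (s : ℝ) ≤ 1 - n * η → s ≤ t₀ := fun hs => by
    rw [div_le_iff₀ hη] at hn
    exact Subtype.coe_le_coe.1 (by linarith [t₀.2.1])
  exact ⟨s, hs.elim id hs0, hsX, hD'⟩

lemma dist_eq_of_ray {f : unitInterval → ℂ} {u : ℂ} (hu : ‖u‖ = 1)
    (hf : ∀ t : unitInterval, (t : ℝ) ≤ 1 / 2 → f t = (2 * t : ℝ) • u) {s t : unitInterval}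
    (hst : s ≤ t) (ht : (t : ℝ) ≤ 1 / 2) : dist (f s) (f t) = 2 * (t - s) := by
  have hst' := Subtype.coe_le_coe.2 hst
  rw [hf s (hst'.trans ht), hf t ht, dist_comm, dist_eq_norm, ← sub_smul, norm_smul, hu,
    mul_one, ← mul_sub, Real.norm_of_nonneg (by linarith)]

/-- `exists_isPulled_le` brings `y` to a point `γ t` shortly before the disc of radius `2 * τ`, and
the disc about `γ t` that touches it at `γ τ` allows the last step. -/
lemma exists_isPulled_ball [Finite V] (hxy : G.Adj x y) (hγ : Function.Injective γ)
    (hrange : range γ = D.arc s(x, y)) {u : ℂ} (hu : ‖u‖ = 1)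
    (hray : ∀ t : unitInterval, (t : ℝ) ≤ 1 / 2 → γ t = (2 * t : ℝ) • u) {τ : unitInterval}
    (hτ : 0 < τ) (hτ2 : (τ : ℝ) < 1 / 2)
    (hfar : ∀ t : unitInterval, 1 / 2 ≤ (t : ℝ) → 2 * (τ : ℝ) < ‖γ t‖)
    (hav : ∀ w, G.Adj y w → w ≠ x → Disjoint (D.arc s(y, w)) (Metric.closedBall 0 (2 * τ))) :
    ∃ D', D.IsPulled γ τ (Metric.ball 0 (2 * τ)) D' := by
  have hnorm (t : unitInterval) (ht : (t : ℝ) ≤ 1 / 2) : ‖γ t‖ = 2 * t := by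
    rw [hray t ht, norm_smul, hu, mul_one, Real.norm_of_nonneg (by linarith [t.2.1])]
  obtain ⟨r, hr, hball⟩ := Metric.isOpen_iff.1 (D.isClosed_rest y).isOpen_compl (γ τ)
    (notMem_rest_of_pos hxy hγ hrange hτ)
  obtain ⟨t₀, ht₀⟩ : ∃ t₀ : unitInterval, (t₀ : ℝ) = min (τ + r / 8) (1 / 2) :=
    ⟨⟨min (τ + r / 8) (1 / 2), le_min (by linarith [τ.2.1]) (by norm_num),
      (min_le_right _ _).trans (by norm_num)⟩, rfl⟩
  have hτt₀ : τ < t₀ := Subtype.coe_lt_coe.1 (ht₀ ▸ lt_min (by linarith) hτ2)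
  have ht₀2 : (t₀ : ℝ) ≤ 1 / 2 := ht₀ ▸ min_le_right _ _
  obtain ⟨t, htt₀, htX, D', hD'⟩ := exists_isPulled_le hxy hγ hrange
    Metric.isClosed_closedBall hav (hτ.trans hτt₀) fun t ht => by
      rw [mem_closedBall_zero_iff, not_le]
      rcases le_total (t : ℝ) (1 / 2) with h | h
      · rw [hnorm t h]
        linarith [Subtype.coe_lt_coe.2 (hτt₀.trans_le ht)]
      · exact hfar t h
  have htt₀' := Subtype.coe_le_coe.2 htt₀
  have ht2 := htt₀'.trans ht₀2
  have hτt : τ < t := by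
    rw [mem_closedBall_zero_iff, not_le, hnorm t ht2] at htX
    exact Subtype.coe_lt_coe.1 (by linarith)
  have hτt' := Subtype.coe_lt_coe.2 hτt
  have hdist := dist_eq_of_ray hu hray hτt.le ht2
  refine (hD'.mono Metric.ball_subset_closedBall).step hxy hγ hτ hτt (fun v hvτ => ?_)
    (disjoint_union_right.2 ⟨?_, ?_⟩)
  · rw [Metric.mem_closedBall, dist_eq_of_ray hu hray (hvτ.trans hτt).le ht2, hdist]
    linarith [Subtype.coe_lt_coe.2 hvτ]
  · refine (subset_compl_iff_disjoint_right.1 hball).mono_left (Metric.closedBall_subset_ball' ?_)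
    rw [dist_comm (γ t), hdist]
    linarith [min_le_left (τ + r / 8) (1 / 2 : ℝ)]
  · refine Metric.closedBall_disjoint_ball ?_
    rw [hdist, dist_zero_right, hnorm t ht2]
    linarith

end PlaneDrawing

/-! ### Straightening the edges at a vertex of degree three -/

/-- The arc `A` from `0` to `q` starts with the segment from `0` to `u`, beyond which it stays at
distance at least `δ` from `0`. -/
def StartsStraight (u : ℂ) (δ : ℝ) (q : ℂ) (A : Set ℂ) : Prop :=
  ∃ γ : Path 0 q, Function.Injective γ ∧ range γ = A ∧
    (∀ t : unitInterval, (t : ℝ) ≤ 1 / 2 → γ t = (2 * t : ℝ) • u) ∧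
    ∀ t : unitInterval, 1 / 2 ≤ (t : ℝ) → δ ≤ ‖γ t‖

lemma startsStraight_segment_union {u q : ℂ} {δ : ℝ} {T : Set ℂ} (hu : u ≠ 0) (hT : IsArc u q T)
    (h : segment ℝ 0 u ∩ T ⊆ {u}) (hδ : ∀ p ∈ T, δ ≤ ‖p‖) :
    StartsStraight u δ q (segment ℝ 0 u ∪ T) := by
  obtain ⟨β, hβ, rfl⟩ := hT
  have htail (t : unitInterval) (ht : 1 / 2 ≤ (t : ℝ)) :
      ((Path.segment 0 u).trans β) t ∈ range β := by
    rw [Path.trans_apply]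
    split_ifs with h
    · have : (⟨2 * t, (unitInterval.mul_pos_mem_iff zero_lt_two).2 ⟨t.2.1, h⟩⟩ :
          unitInterval) = 1 :=
        Subtype.ext (show (2 * t : ℝ) = 1 by linarith)
      rw [this, Path.target]
      exact ⟨0, β.source⟩
    · exact mem_range_self _
  refine ⟨(Path.segment 0 u).trans β, injective_trans (Path.segment_injective_of_ne hu.symm) hβ
    (by rwa [Path.range_segment]), by rw [Path.trans_range, Path.range_segment], fun t ht => ?_,
    fun t ht => hδ _ (htail t ht)⟩
  rw [Path.trans_apply, dif_pos ht, Path.segment_apply, AffineMap.lineMap_apply_module', sub_zero,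
    add_zero]

lemma affineIndependent_iff_linearIndependent_pair {E : Type*} [AddCommGroup E] [Module ℝ E]
    {a b c : E} : AffineIndependent ℝ ![a, b, c] ↔ LinearIndependent ℝ ![b - a, c - a] := by
  rw [affineIndependent_iff_linearIndependent_vsub ℝ _ (0 : Fin 3),
    ← linearIndependent_equiv (finSuccAboveEquiv (0 : Fin 3))]
  congr! 1
  ext i
  fin_cases i <;> rfl

lemma linearIndependent_sub_centroid {E : Type*} [AddCommGroup E] [Module ℝ E] {a b c p : E}
    (h : AffineIndependent ℝ ![a, b, c]) (hp : (3 : ℝ) • p = a + b + c) :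
    LinearIndependent ℝ ![b - p, c - p] := by
  rw [affineIndependent_iff_linearIndependent_pair, LinearIndependent.pair_iff] at h
  rw [LinearIndependent.pair_iff]
  intro s t hst
  have hcomb : (2 * s - t) • (b - a) + (2 * t - s) • (c - a) = 0 := by
    have : (2 * s - t) • (b - a) + (2 * t - s) • (c - a) =
        (3 : ℝ) • (s • (b - p) + t • (c - p)) + (s + t) • ((3 : ℝ) • p - (a + b + c)) := by
      module
    rw [this, hst, hp, sub_self, smul_zero, smul_zero, add_zero]
  obtain ⟨h₁, h₂⟩ := h _ _ hcomb
  constructor <;> linarith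

lemma exists_affineEquiv_of_affineIndependent {a b c : ℂ} (h : AffineIndependent ℝ ![a, b, c]) :
    ∃ φ : ℂ ≃ᵃ[ℝ] ℂ, φ a = -1 - Complex.I ∧ φ b = 1 ∧ φ c = Complex.I ∧
      φ.symm 0 ∈ convexHull ℝ {a, b, c} := by
  set p : ℂ := (1 / 3 : ℝ) • a + (2 / 3 : ℝ) • ((1 / 2 : ℝ) • b + (1 / 2 : ℝ) • c) with hp
  have hp3 : (3 : ℝ) • p = a + b + c := by rw [hp]; module
  set B := basisOfLinearIndependentOfCardEqFinrank (linearIndependent_sub_centroid h hp3) (by simp)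
  set L := B.equiv Complex.basisOneI (Equiv.refl _)
  have hLb : L (b - p) = 1 := by simpa [B] using B.equiv_apply 0 Complex.basisOneI (Equiv.refl _)
  have hLc : L (c - p) = Complex.I := by
    simpa [B] using B.equiv_apply 1 Complex.basisOneI (Equiv.refl _)
  refine ⟨(AffineEquiv.vaddConst ℝ p).symm.trans L.toAffineEquiv, ?_, hLb, hLc, ?_⟩
  · have hap : a - p = -(b - p) - (c - p) := by
      rw [add_assoc] at hp3
      rw [eq_sub_of_add_eq hp3.symm]
      module
    change L (a - p) = _
    rw [hap, map_sub, map_neg, hLb, hLc]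
  · have hconv := convex_convexHull ℝ {a, b, c}
    have hsub := subset_convexHull ℝ {a, b, c}
    have hmem : p ∈ convexHull ℝ {a, b, c} :=
      hconv (hsub (by simp)) (hconv (hsub (by simp)) (hsub (by simp)) (by norm_num) (by norm_num)
        (by norm_num)) (by norm_num) (by norm_num) (by norm_num)
    change L.symm 0 + p ∈ _
    rwa [map_zero, zero_add]

namespace PlaneDrawing

variable {V : Type u} {G : SimpleGraph V} {S : Set V} {D : PlaneDrawing G S} {x y z i w : V}

lemma IsTail.startsStraight_image {r δ : ℝ} {p q : ℂ} {T : Set ℂ} {φ : ℂ ≃ᵃ[ℝ] ℂ}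
    (hT : D.IsTail x w r q T) (hp : p ∈ Metric.closedBall (D.pos x) r) (hφ : φ p = 0)
    (hq : φ q ≠ 0) (hδ : ∀ t ∈ T, δ ≤ ‖φ t‖) :
    StartsStraight (φ q) δ (φ (D.pos w)) (φ '' (segment ℝ p q ∪ T)) := by
  have hseg : φ '' segment ℝ p q = segment ℝ 0 (φ q) :=
    hφ ▸ image_segment ℝ φ.toAffineMap p q
  rw [image_union, hseg]
  refine startsStraight_segment_union hq
    (hT.isArc.image φ.continuous_of_finiteDimensional.continuousOn φ.injective.injOn) ?_
    (forall_mem_image.2 hδ)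
  rw [← hseg, ← image_inter φ.injective, ← image_singleton]
  exact image_mono fun t ht => hT.inter_closedBall ⟨ht.2, hT.segment_subset hp ht.1⟩

/-- Within the disc of radius `δ` about the vertex `x`, which lies at `0`, the drawing consists of
the edges `x y` and `x z`, running along the positive real and imaginary axes, and of other edges at
`x` in the left half plane. -/
structure IsCorner (D : PlaneDrawing G S) (x y z : V) (δ : ℝ) : Prop where
  pos_eq : D.pos x = 0
  left : StartsStraight 1 δ (D.pos y) (D.arc s(x, y))
  right : StartsStraight Complex.I δ (D.pos z) (D.arc s(x, z))
  le_norm_rest : ∀ p ∈ D.rest x, δ ≤ ‖p‖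
  le_norm_other : ∀ w, G.Adj x w → w ≠ y → w ≠ z → ∀ p ∈ D.arc s(x, w), δ ≤ ‖p‖ ∨ p.re ≤ 0

lemma re_nonpos_of_mem_segment {p : ℂ} (hp : p ∈ segment ℝ 0 (-1 - Complex.I)) : p.re ≤ 0 := by
  obtain ⟨a, b, -, hb, -, rfl⟩ := hp
  simpa using hb

lemma part_image (φ : ℂ → ℂ) (hφ : ContinuousOn φ (D.part S G.edgeSet))
    (hinj : InjOn φ (D.part S G.edgeSet)) (A : Set V) (F : Set (Sym2 V)) :
    (D.image φ hφ hinj).part A F = φ '' D.part A F := by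
  simp only [part, image, image_union, image_iUnion, image_comp]

lemma rest_redraw [DecidableEq V] {v : V} {r : ℝ} {q : Sym2 V → ℂ} {T : Sym2 V → Set ℂ} {p : ℂ}
    (hv : v ∈ S) (hr : 0 < r) (hrest : Disjoint (Metric.closedBall (D.pos v) r) (D.rest v))
    (hT : ∀ w, G.Adj v w → D.IsTail v w r (q s(v, w)) (T s(v, w)))
    (hp : p ∈ Metric.closedBall (D.pos v) r) : (redraw hv hr hrest hT hp).rest v = D.rest v :=
  rest_congr (fun _ hw => Function.update_of_ne hw _ _) fun _ he => redrawArc_of_notMem he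

/-- Three edges leaving the disc at the exit points `q` can be redrawn straight from the centroid of
their exit points, whatever the order in which these lie on the circle. -/
lemma exists_isCorner_of_isTail [Finite V] {r δ : ℝ} {q : V → ℂ} {T : V → Set ℂ}
    {φ : ℂ ≃ᵃ[ℝ] ℂ} (hr : 0 < r) (hrest : Disjoint (Metric.closedBall (D.pos x) r) (D.rest x))
    (hT : ∀ w, G.Adj x w → D.IsTail x w r (q w) (T w))
    (hp : φ.symm 0 ∈ Metric.closedBall (D.pos x) r)
    (hx : ∀ w, G.Adj x w ↔ w = y ∨ w = z ∨ w = i) (hφy : φ (q y) = 1) (hφz : φ (q z) = Complex.I)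
    (hφi : φ (q i) = -1 - Complex.I) (hδ_rest : ∀ t ∈ D.rest x, δ ≤ ‖φ t‖)
    (hδ : ∀ w, G.Adj x w → ∀ t ∈ T w, δ ≤ ‖φ t‖) :
    ∃ D' : PlaneDrawing G S, D'.IsCorner x y z δ := by
  classical
  have hxy := (hx y).2 (by simp)
  have hxz := (hx z).2 (by simp)
  have hφp : φ (φ.symm 0) = 0 := φ.apply_symm_apply 0
  have hT' (w : V) (hw : G.Adj x w) :
      D.IsTail x w r (edgeIndexed x q s(x, w)) (edgeIndexed x T s(x, w)) := by
    simpa only [edgeIndexed_mk] using hT w hw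
  set D₁ := redraw (D.adj_mem hxy) hr hrest hT' hp
  have harc (w : V) : D₁.arc s(x, w) = segment ℝ (φ.symm 0) (q w) ∪ T w := by
    simp only [D₁, redraw, redrawArc_of_mem (Sym2.mem_mk_left x w), edgeIndexed_mk]
  have hpos_self : D₁.pos x = φ.symm 0 := Function.update_self (f := D.pos) ..
  have hpos (w : V) (hw : G.Adj x w) : D₁.pos w = D.pos w := Function.update_of_ne hw.ne' _ _
  set D₂ := D₁.image φ φ.continuous_of_finiteDimensional.continuousOn φ.injective.injOn
  have hstraight (w : V) (hw : G.Adj x w) (hq : φ (q w) ≠ 0) :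
      StartsStraight (φ (q w)) δ (D₂.pos w) (D₂.arc s(x, w)) := by
    change StartsStraight _ _ (φ (D₁.pos w)) (φ '' D₁.arc s(x, w))
    rw [harc, hpos w hw]
    exact (hT w hw).startsStraight_image hp hφp hq (hδ w hw)
  refine ⟨D₂, ?_, hφy ▸ hstraight y hxy (by simp [hφy]), hφz ▸ hstraight z hxz (by simp [hφz]),
    fun t ht => ?_, fun w hw hwy hwz t ht => ?_⟩
  · exact (congrArg φ hpos_self).trans hφp
  · rw [rest, part_image, ← rest, rest_redraw] at ht
    obtain ⟨t, ht, rfl⟩ := ht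
    exact hδ_rest t ht
  · obtain rfl := (((hx w).1 hw).resolve_left hwy).resolve_left hwz
    change t ∈ φ '' D₁.arc s(x, w) at ht
    rw [harc] at ht
    obtain ⟨t, ht | ht, rfl⟩ := ht
    · right
      apply re_nonpos_of_mem_segment
      rw [← hφp, ← hφi]
      exact image_segment ℝ φ.toAffineMap _ _ ▸ mem_image_of_mem φ ht
    · exact Or.inl (hδ w hw t ht)

lemma exists_pos_forall_le_norm {E X : Type*} [SeminormedAddCommGroup E] [TopologicalSpace X]
    {f : E → X} (hf : Continuous f) {K : Set X} (hK : IsClosed K) (h : f 0 ∉ K) :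
    ∃ δ > 0, ∀ p, f p ∈ K → δ ≤ ‖p‖ := by
  obtain ⟨δ, hδ, hball⟩ := Metric.isOpen_iff.1 (hK.isOpen_compl.preimage hf) 0 h
  exact ⟨δ, hδ, fun p hp => not_lt.1 fun hlt => hball (mem_ball_zero_iff.2 hlt) hp⟩

lemma exists_isCorner [Finite V] (D : PlaneDrawing G S)
    (hx : ∀ w, G.Adj x w ↔ w = y ∨ w = z ∨ w = i) (hyz : y ≠ z) (hyi : y ≠ i) (hzi : z ≠ i) :
    ∃ (D' : PlaneDrawing G S) (δ : ℝ), 0 < δ ∧ D'.IsCorner x y z δ := by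
  classical
  have hxy := (hx y).2 (by simp)
  have hxz := (hx z).2 (by simp)
  have hxi := (hx i).2 (by simp)
  obtain ⟨r, hr, hrest⟩ := Metric.nhds_basis_closedBall.mem_iff.1
    ((D.isClosed_rest x).isOpen_compl.mem_nhds (D.pos_notMem_rest (D.adj_mem hxy)))
  rw [subset_compl_iff_disjoint_right] at hrest
  choose! q T hT using fun w (hw : G.Adj x w) => D.exists_isTail hw hr hrest
  have hsphere : EuclideanGeometry.Cospherical (Metric.sphere (D.pos x) r) := ⟨_, r, fun _ h => h⟩
  obtain ⟨φ, hφi, hφy, hφz, hp⟩ := exists_affineEquiv_of_affineIndependent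
    (hsphere.affineIndependent_of_mem_of_ne (hT i hxi).mem_sphere (hT y hxy).mem_sphere
      (hT z hxz).mem_sphere ((hT i hxi).ne hr (hT y hxy) hxi hxy hyi.symm)
      ((hT i hxi).ne hr (hT z hxz) hxi hxz hzi.symm) ((hT y hxy).ne hr (hT z hxz) hxy hxz hyz))
  have hmem {w : V} (hw : G.Adj x w) : q w ∈ Metric.closedBall (D.pos x) r :=
    Metric.sphere_subset_closedBall (hT w hw).mem_sphere
  replace hp : φ.symm 0 ∈ Metric.closedBall (D.pos x) r :=
    convexHull_min (insert_subset (hmem hxi) (insert_subset (hmem hxy)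
      (singleton_subset_iff.2 (hmem hxz)))) (convex_closedBall _ _) hp
  have hq (w : V) (hw : G.Adj x w) : φ (q w) ≠ 0 := by
    rcases (hx w).1 hw with rfl | rfl | rfl
    · simp [hφy]
    · simp [hφz]
    · simp [hφi, Complex.ext_iff]
  have hK : φ.symm 0 ∉ D.rest x ∪ ⋃ w ∈ {w | G.Adj x w}, T w := by
    rintro (h | h)
    · exact hrest.notMem_of_mem_left hp h
    · obtain ⟨w, hw, h⟩ := mem_iUnion₂.1 h
      exact hq w hw ((hT w hw).inter_closedBall ⟨h, hp⟩ ▸ φ.apply_symm_apply 0)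
  have hK_closed : IsClosed (D.rest x ∪ ⋃ w ∈ {w | G.Adj x w}, T w) :=
    (D.isClosed_rest x).union <| (toFinite _).isClosed_biUnion fun w hw =>
      (hT w hw).isArc.isCompact.isClosed
  obtain ⟨δ, hδ, hle⟩ :=
    exists_pos_forall_le_norm φ.symm.continuous_of_finiteDimensional hK_closed hK
  have hnorm {t : ℂ} (ht : t ∈ D.rest x ∪ ⋃ w ∈ {w | G.Adj x w}, T w) : δ ≤ ‖φ t‖ :=
    hle _ (by rwa [φ.symm_apply_apply])
  obtain ⟨D', hD'⟩ := exists_isCorner_of_isTail hr hrest hT hp hx hφy hφz hφi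
    (fun t ht => hnorm (Or.inl ht)) fun w hw t ht => hnorm (Or.inr (mem_iUnion₂_of_mem hw ht))
  exact ⟨D', δ, hδ, hD'⟩

end PlaneDrawing

/-! ### Drawing a triangle with three straight edges -/

lemma image_Icc_eq_segment {f : unitInterval → ℂ} {τ : unitInterval} {u : ℂ} (hτ : 0 < τ)
    (hf : ∀ t ≤ τ, f t = (2 * t : ℝ) • u) : f '' Icc 0 τ = segment ℝ 0 ((2 * τ : ℝ) • u) := by
  have hτ0 : (0 : ℝ) < τ := Subtype.coe_lt_coe.2 hτ
  rw [segment_eq_image_lineMap]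
  ext p
  simp only [mem_image, AffineMap.lineMap_apply_module', sub_zero, add_zero, smul_smul]
  constructor
  · rintro ⟨t, ht, rfl⟩
    refine ⟨t / τ, ⟨div_nonneg t.2.1 hτ0.le, (div_le_one hτ0).2 ht.2⟩, ?_⟩
    rw [hf t ht.2, mul_left_comm, div_mul_cancel₀ _ hτ0.ne']
  · rintro ⟨s, ⟨hs0, hs1⟩, rfl⟩
    have hsτ : s * τ ≤ τ := mul_le_of_le_one_left τ.2.1 hs1
    have ht : s * τ ∈ Icc (0 : ℝ) 1 := ⟨mul_nonneg hs0 τ.2.1, hsτ.trans τ.2.2⟩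
    exact ⟨⟨s * τ, ht⟩, ⟨ht.1, hsτ⟩, by rw [hf _ hsτ, mul_left_comm]⟩

namespace PlaneDrawing

variable {V : Type u} {G : SimpleGraph V} {S : Set V} {D : PlaneDrawing G S} {x y z : V} {δ ρ : ℝ}

lemma exists_shortened [Finite V] [DecidableEq V] (hxy : G.Adj x y) (hpos : D.pos x = 0) {u : ℂ}
    (hu : ‖u‖ = 1) (hst : StartsStraight u δ (D.pos y) (D.arc s(x, y))) (hρ : 0 < ρ) (hρ1 : ρ < 1)
    (hρδ : ρ < δ) (hav : ∀ w, G.Adj y w → w ≠ x → ∀ p ∈ D.arc s(y, w), δ ≤ ‖p‖) :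
    ∃ D' : PlaneDrawing G S, D'.pos = Function.update D.pos y (ρ • u) ∧
      D'.arc s(x, y) = segment ℝ 0 (ρ • u) ∧ (∀ e, y ∉ e → D'.arc e = D.arc e) ∧
      ∀ w, G.Adj y w → w ≠ x → ∀ p ∈ D'.arc s(y, w), ρ ≤ ‖p‖ := by
  obtain ⟨γ, hγ, hrange, hray, hfar⟩ := hst
  set τ : unitInterval := ⟨ρ / 2, by constructor <;> linarith⟩
  have hτ : 2 * (τ : ℝ) = ρ := mul_div_cancel₀ ρ two_ne_zero
  have hτ0 : 0 < τ := Subtype.coe_lt_coe.1 (half_pos hρ)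
  obtain ⟨D', hD'⟩ := exists_isPulled_ball (γ := γ.cast hpos rfl) hxy hγ hrange hu hray (τ := τ)
    hτ0 (by linarith)
    (fun t ht => by rw [hτ]; exact hρδ.trans_le (hfar t ht))
    (fun w hw hwx => Set.disjoint_left.2 fun p hp hball => by
      rw [hτ, mem_closedBall_zero_iff] at hball
      exact (hρδ.trans_le (hav w hw hwx p hp)).not_ge hball)
  have hγτ : γ τ = ρ • u := by rw [hray τ (by linarith), hτ]
  refine ⟨D', hγτ ▸ hD'.pos_eq, ?_, hD'.arc_of_notMem, fun w hw hwx p hp => ?_⟩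
  · rw [hD'.arc_eq, ← hτ]
    exact image_Icc_eq_segment hτ0 fun t ht => hray t (by linarith [Subtype.coe_le_coe.2 ht])
  · have := (hD'.disjoint w hw hwx).notMem_of_mem_left hp
    rwa [hτ, mem_ball_zero_iff, not_lt] at this

/-- The edges `x y` and `x z` are the two legs of length `ρ` of a right-angled triangle with right
angle at `x`; the drawing does not meet the interior or the open hypotenuse of that triangle. -/
structure IsRightAngle (D : PlaneDrawing G S) (x y z : V) (ρ : ℝ) : Prop where
  pos_x : D.pos x = 0
  pos_y : D.pos y = ρ • (1 : ℂ)
  pos_z : D.pos z = ρ • Complex.I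
  arc_xy : D.arc s(x, y) = segment ℝ 0 (ρ • (1 : ℂ))
  arc_xz : D.arc s(x, z) = segment ℝ 0 (ρ • Complex.I)
  le_norm_or : ∀ p ∈ D.part S G.edgeSet, ρ ≤ ‖p‖ ∨ p.re ≤ 0 ∨ p.im ≤ 0

lemma IsCorner.exists_shortened_both [Finite V] [DecidableEq V] (h : D.IsCorner x y z δ)
    (hδ : 0 < δ) (hxy : G.Adj x y) (hxz : G.Adj x z) (hne : y ≠ z) (hyz : ¬ G.Adj y z) :
    ∃ (D' : PlaneDrawing G S) (ρ : ℝ), 0 < ρ ∧ ρ < δ ∧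
      D'.pos = Function.update (Function.update D.pos y (ρ • (1 : ℂ))) z (ρ • Complex.I) ∧
      D'.arc s(x, y) = segment ℝ 0 (ρ • (1 : ℂ)) ∧ D'.arc s(x, z) = segment ℝ 0 (ρ • Complex.I) ∧
      (∀ e, y ∉ e → z ∉ e → D'.arc e = D.arc e) ∧
      ∀ e ∈ G.edgeSet, x ∉ e → ∀ p ∈ D'.arc e, ρ ≤ ‖p‖ := by
  obtain ⟨ρ, hρ, hρ1⟩ := exists_between (lt_min hδ one_pos)
  obtain ⟨hρδ, hρ1⟩ := lt_min_iff.1 hρ1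
  have hrest {e : Sym2 V} (he : e ∈ G.edgeSet) (hxe : x ∉ e) {p : ℂ} (hp : p ∈ D.arc e) :
      δ ≤ ‖p‖ := h.le_norm_rest p (arc_subset_part (mem_sdiff_of_mem he hxe) hp)
  obtain ⟨D₁, hpos₁, hxy₁, harc₁, hav₁⟩ := exists_shortened hxy h.pos_eq norm_one h.left hρ hρ1 hρδ
    fun w hw hwx _ => hrest hw (by simp [hxy.ne, hwx.symm])
  obtain ⟨D₂, hpos₂, hxz₂, harc₂, hav₂⟩ := exists_shortened (D := D₁) hxz
    (by rw [hpos₁, Function.update_of_ne hxy.ne, h.pos_eq]) Complex.norm_I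
    (by rw [hpos₁, Function.update_of_ne hne.symm, harc₁ _ (by simp [hxy.ne', hne])]
        exact h.right) hρ hρ1 hρδ
    fun w hw hwx p hp => hrest hw (by simp [hxz.ne, hwx.symm])
      (harc₁ s(z, w) (by simp [hne, show y ≠ w by rintro rfl; exact hyz hw.symm]) ▸ hp)
  refine ⟨D₂, ρ, hρ, hρδ, hpos₁ ▸ hpos₂, (harc₂ _ (by simp [hxz.ne', hne.symm])).trans hxy₁, hxz₂,
    fun e hye hze => (harc₂ e hze).trans (harc₁ e hye), fun e he hxe p hp => ?_⟩
  by_cases hze : z ∈ e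
  · obtain ⟨w, rfl⟩ := hze
    exact hav₂ w he (by rintro rfl; simp at hxe) p hp
  rw [harc₂ e hze] at hp
  by_cases hye : y ∈ e
  · obtain ⟨w, rfl⟩ := hye
    exact hav₁ w he (by rintro rfl; simp at hxe) p hp
  · rw [harc₁ e hye] at hp
    exact hρδ.le.trans (hrest he hxe hp)

lemma IsCorner.exists_isRightAngle [Finite V] (h : D.IsCorner x y z δ) (hδ : 0 < δ)
    (hxy : G.Adj x y) (hxz : G.Adj x z) (hne : y ≠ z) (hyz : ¬ G.Adj y z) :
    ∃ (D' : PlaneDrawing G S) (ρ : ℝ), 0 < ρ ∧ D'.IsRightAngle x y z ρ := by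
  classical
  obtain ⟨D', ρ, hρ, hρδ, hpos, harc_xy, harc_xz, harc, hav⟩ :=
    h.exists_shortened_both hδ hxy hxz hne hyz
  have hpos_of_ne (w : V) (hwy : w ≠ y) (hwz : w ≠ z) : D'.pos w = D.pos w := by
    rw [hpos, Function.update_of_ne hwz, Function.update_of_ne hwy]
  have hx : D'.pos x = 0 := (hpos_of_ne x hxy.ne hxz.ne).trans h.pos_eq
  have hy : D'.pos y = ρ • (1 : ℂ) := by rw [hpos, Function.update_of_ne hne, Function.update_self]
  have hz : D'.pos z = ρ • Complex.I := by rw [hpos, Function.update_self]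
  refine ⟨D', ρ, hρ, hx, hy, hz, harc_xy, harc_xz, fun p hp => ?_⟩
  rcases D'.mem_part.1 hp with ⟨w, hw, rfl⟩ | ⟨e, he, hp⟩
  · by_cases hwx : w = x
    · simp [hwx, hx]
    by_cases hwy : w = y
    · simp [hwy, hy]
    by_cases hwz : w = z
    · simp [hwz, hz]
    · rw [hpos_of_ne w hwy hwz]
      exact Or.inl (hρδ.le.trans (h.le_norm_rest _ (pos_mem_part ⟨hw, hwx⟩)))
  by_cases hxe : x ∈ e
  · obtain ⟨w, rfl⟩ := hxe
    by_cases hwy : w = y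
    · subst hwy
      rw [harc_xy] at hp
      obtain ⟨a, b, -, -, -, rfl⟩ := hp
      simp
    by_cases hwz : w = z
    · subst hwz
      rw [harc_xz] at hp
      obtain ⟨a, b, -, -, -, rfl⟩ := hp
      simp
    · rw [harc _ (by simp [hxy.ne', Ne.symm hwy]) (by simp [hxz.ne', Ne.symm hwz])] at hp
      exact (h.le_norm_other w he hwy hwz p hp).imp hρδ.le.trans Or.inl
  · exact Or.inl (hav e he hxe p hp)

end PlaneDrawing

section Triangle

variable {a b c : ℂ}

lemma exists_affineBasis (h : AffineIndependent ℝ ![a, b, c]) :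
    ∃ B : AffineBasis (Fin 3) ℝ ℂ, ⇑B = ![a, b, c] :=
  ⟨⟨_, h, (h.affineSpan_eq_top_iff_card_eq_finrank_add_one).2 (by simp)⟩, rfl⟩

lemma range_triple : range ![a, b, c] = {a, b, c} := by
  simp only [Matrix.range_cons, Matrix.range_empty, union_empty, singleton_union]

lemma disjoint_segment_interior_convexHull (h : AffineIndependent ℝ ![a, b, c]) :
    Disjoint (segment ℝ b c) (interior (convexHull ℝ {a, b, c})) := by
  obtain ⟨B, hB⟩ := exists_affineBasis h
  rw [← range_triple, ← hB, B.interior_convexHull, Set.disjoint_left]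
  intro p hp hpos
  have hzero : segment ℝ b c ⊆ (B.coord 0) ⁻¹' {0} := by
    refine ((convex_singleton _).affine_preimage (B.coord 0)).segment_subset ?_ ?_
    · simpa [hB] using B.coord_apply 0 1
    · simpa [hB] using B.coord_apply 0 2
  exact (hpos 0).ne' (hzero hp)

lemma convexHull_mem_nhds_centroid (h : AffineIndependent ℝ ![a, b, c]) {p : ℂ}
    (hp : (3 : ℝ) • p = a + b + c) : convexHull ℝ {a, b, c} ∈ nhds p := by
  obtain ⟨B, hB⟩ := exists_affineBasis h
  have hcentroid : Finset.univ.centroid ℝ B = p := by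
    rw [Finset.centroid, Finset.affineCombination_eq_linear_combination _ _ _
      (Finset.sum_centroidWeights_eq_one_of_nonempty _ _ Finset.univ_nonempty)]
    have : p = (3 : ℝ)⁻¹ • (a + b + c) := by rw [← hp, inv_smul_smul₀ three_ne_zero]
    simp [hB, Fin.sum_univ_three, this]
  rw [← mem_interior_iff_mem_nhds, ← hcentroid, ← range_triple, ← hB]
  exact B.centroid_mem_interior_convexHull

lemma frontier_convexHull_subset (h : AffineIndependent ℝ ![a, b, c]) :
    frontier (convexHull ℝ {a, b, c}) ⊆ segment ℝ a b ∪ segment ℝ a c ∪ segment ℝ b c := by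
  obtain ⟨B, hB⟩ := exists_affineBasis h
  rw [← range_triple, ← hB, ((finite_range B).isClosed_convexHull ℝ).frontier_eq,
    B.interior_convexHull, B.convexHull_eq_nonneg_coord]
  rintro p ⟨hp, hnpos⟩
  have hsum := B.sum_coord_apply_eq_one p
  have hcomb := B.linear_combination_coord_eq_self p
  simp only [Fin.sum_univ_three, hB] at hsum hcomb
  simp only [mem_ofPred_eq, not_forall, not_lt] at hp hnpos
  obtain ⟨i, hi⟩ := hnpos
  replace hi := hi.antisymm (hp i)
  fin_cases i
  · change B.coord 0 p = 0 at hi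
    exact Or.inr ⟨_, _, hp 1, hp 2, by simpa [hi] using hsum, by simpa [hi] using hcomb⟩
  · change B.coord 1 p = 0 at hi
    exact Or.inl (Or.inr ⟨_, _, hp 0, hp 2, by simpa [hi] using hsum, by simpa [hi] using hcomb⟩)
  · change B.coord 2 p = 0 at hi
    exact Or.inl (Or.inl ⟨_, _, hp 0, hp 1, by simpa [hi] using hsum, by simpa [hi] using hcomb⟩)

end Triangle

namespace PlaneDrawing

variable {V : Type u} {G : SimpleGraph V} {S : Set V} {D : PlaneDrawing G S} {x y z i : V} {ρ : ℝ}
  {a b c : ℂ}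

section Glue

/-- The drawing with the junk values of `pos` changed. -/
def withPos (D : PlaneDrawing G S) {pos : V → ℂ} (h : EqOn pos D.pos S) : PlaneDrawing G S where
  pos := pos
  arc := D.arc
  adj_mem := D.adj_mem
  injOn_pos := D.injOn_pos.congr h.symm
  isArc hab := by
    rw [h (D.adj_mem hab), h (D.adj_mem hab.symm)]
    exact D.isArc hab
  arc_inter_arc := h.image_eq ▸ D.arc_inter_arc
  mem_of_pos_mem_arc he hw hp := D.mem_of_pos_mem_arc he hw (h hw ▸ hp)

lemma part_withPos {pos : V → ℂ} (h : EqOn pos D.pos S) (F : Set (Sym2 V)) :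
    (D.withPos h).part S F = D.part S F :=
  congrArg (· ∪ _) h.image_eq

variable {G₁ G₂ : SimpleGraph V} {S₁ S₂ : Set V} {D₁ : PlaneDrawing G₁ S₁} {D₂ : PlaneDrawing G₂ S₂}

lemma mem_inter_of_pos_mem_part_inter (hpos : D₁.pos = D₂.pos)
    (hmeet : D₁.part S₁ G₁.edgeSet ∩ D₂.part S₂ G₂.edgeSet ⊆ D₁.pos '' (S₁ ∩ S₂)) {w : V}
    (hw : w ∈ S₁ ∪ S₂) (h : D₁.pos w ∈ D₁.part S₁ G₁.edgeSet ∩ D₂.part S₂ G₂.edgeSet) :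
    w ∈ S₁ ∩ S₂ := by
  obtain ⟨k, hk, hkw⟩ := hmeet h
  rcases hw with hw | hw
  · exact D₁.injOn_pos hk.1 hw hkw ▸ hk
  · exact D₂.injOn_pos hk.2 hw (hpos ▸ hkw) ▸ hk

open Classical in
/-- The union of two drawings that meet only in common vertices; edges that belong to both graphs
are drawn as in the first drawing. -/
noncomputable def glue (D₁ : PlaneDrawing G₁ S₁) (D₂ : PlaneDrawing G₂ S₂) (hpos : D₁.pos = D₂.pos)
    (hmeet : D₁.part S₁ G₁.edgeSet ∩ D₂.part S₂ G₂.edgeSet ⊆ D₁.pos '' (S₁ ∩ S₂)) :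
    PlaneDrawing (G₁ ⊔ G₂) (S₁ ∪ S₂) :=
  have mem_inter {w : V} := mem_inter_of_pos_mem_part_inter hpos hmeet (w := w)
  have edge_cases {e : Sym2 V} (he : e ∈ (G₁ ⊔ G₂).edgeSet) :
      e ∈ G₁.edgeSet ∧ G₁.edgeSet.piecewise D₁.arc D₂.arc e = D₁.arc e ∨
        e ∈ G₂.edgeSet ∧ G₁.edgeSet.piecewise D₁.arc D₂.arc e = D₂.arc e := by
    rw [SimpleGraph.edgeSet_sup] at he
    by_cases h : e ∈ G₁.edgeSet
    · exact Or.inl ⟨h, piecewise_eq_of_mem _ _ _ h⟩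
    · exact Or.inr ⟨he.resolve_left h, piecewise_eq_of_notMem _ _ _ h⟩
  { pos := D₁.pos
    arc := G₁.edgeSet.piecewise D₁.arc D₂.arc
    adj_mem := Or.imp D₁.adj_mem D₂.adj_mem
    injOn_pos := by
      rintro a (ha | ha) b (hb | hb) h
      · exact D₁.injOn_pos ha hb h
      · exact D₁.injOn_pos ha
          (mem_inter (Or.inr hb) ⟨h ▸ pos_mem_part ha, hpos ▸ pos_mem_part hb⟩).1 h
      · exact D₁.injOn_pos
          (mem_inter (Or.inr ha) ⟨h ▸ pos_mem_part hb, hpos ▸ pos_mem_part ha⟩).1 hb h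
      · exact D₂.injOn_pos ha hb (hpos ▸ h)
    isArc {a b} hab := by
      rcases edge_cases (e := s(a, b)) hab with ⟨he, h⟩ | ⟨he, h⟩ <;> rw [h]
      exacts [D₁.isArc he, hpos ▸ D₂.isArc he]
    arc_inter_arc {e f} he hf hne := by
      have common {p : ℂ} (h₁ : p ∈ D₁.part S₁ G₁.edgeSet) (h₂ : p ∈ D₂.part S₂ G₂.edgeSet) :
          p ∈ D₁.pos '' (S₁ ∪ S₂) :=
        image_mono (inter_subset_left.trans subset_union_left) (hmeet ⟨h₁, h₂⟩)
      rcases edge_cases he with ⟨he, h⟩ | ⟨he, h⟩ <;>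
        rcases edge_cases hf with ⟨hf, h'⟩ | ⟨hf, h'⟩ <;> rw [h, h']
      · exact (D₁.arc_inter_arc he hf hne).trans (image_mono subset_union_left)
      · exact fun p hp => common (arc_subset_part he hp.1) (arc_subset_part hf hp.2)
      · exact fun p hp => common (arc_subset_part hf hp.2) (arc_subset_part he hp.1)
      · rw [hpos]
        exact (D₂.arc_inter_arc he hf hne).trans (image_mono subset_union_right)
    mem_of_pos_mem_arc {e w} he hw hp := by
      rcases edge_cases he with ⟨he, h⟩ | ⟨he, h⟩ <;> rw [h] at hp
      · exact D₁.mem_of_pos_mem_arc he (hw.elim id fun hw =>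
          (mem_inter (Or.inr hw) ⟨arc_subset_part he hp, hpos ▸ pos_mem_part hw⟩).1) hp
      · exact D₂.mem_of_pos_mem_arc he (hw.elim (fun hw =>
          (mem_inter (Or.inl hw) ⟨pos_mem_part hw, arc_subset_part he hp⟩).2) id) (hpos ▸ hp) }

lemma arc_glue_of_mem (hpos : D₁.pos = D₂.pos)
    (hmeet : D₁.part S₁ G₁.edgeSet ∩ D₂.part S₂ G₂.edgeSet ⊆ D₁.pos '' (S₁ ∩ S₂)) {e : Sym2 V}
    (he : e ∈ G₁.edgeSet) : (D₁.glue D₂ hpos hmeet).arc e = D₁.arc e := by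
  classical exact if_pos he

lemma arc_glue_of_notMem (hpos : D₁.pos = D₂.pos)
    (hmeet : D₁.part S₁ G₁.edgeSet ∩ D₂.part S₂ G₂.edgeSet ⊆ D₁.pos '' (S₁ ∩ S₂)) {e : Sym2 V}
    (he : e ∉ G₁.edgeSet) : (D₁.glue D₂ hpos hmeet).arc e = D₂.arc e := by
  classical exact if_neg he

lemma part_glue_subset (hpos : D₁.pos = D₂.pos)
    (hmeet : D₁.part S₁ G₁.edgeSet ∩ D₂.part S₂ G₂.edgeSet ⊆ D₁.pos '' (S₁ ∩ S₂)) :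
    (D₁.glue D₂ hpos hmeet).part (S₁ ∪ S₂) (G₁ ⊔ G₂).edgeSet ⊆
      D₁.part S₁ G₁.edgeSet ∪ D₂.part S₂ G₂.edgeSet := by
  intro p hp
  rcases (mem_part _).1 hp with ⟨w, hw | hw, rfl⟩ | ⟨e, he, hp⟩
  · exact Or.inl (pos_mem_part hw)
  · exact Or.inr (hpos ▸ pos_mem_part hw)
  · rw [SimpleGraph.edgeSet_sup] at he
    by_cases h : e ∈ G₁.edgeSet
    · exact Or.inl (arc_subset_part h (arc_glue_of_mem hpos hmeet h ▸ hp))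
    · exact Or.inr (arc_subset_part (he.resolve_left h) (arc_glue_of_notMem hpos hmeet h ▸ hp))

end Glue

/-- A single edge `y z` with ends at `pos y` and `pos z`. -/
def singleEdge {pos : V → ℂ} {T : Set ℂ} (hT : IsArc (pos y) (pos z) T) (hyz : pos y ≠ pos z) :
    PlaneDrawing (SimpleGraph.edge y z) {y, z} where
  pos := pos
  arc _ := T
  adj_mem hab := by
    obtain ⟨⟨rfl, rfl⟩ | ⟨rfl, rfl⟩, -⟩ := (SimpleGraph.edge_adj ..).1 hab <;> simp
  injOn_pos := by simp [InjOn, hyz, hyz.symm]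
  isArc hab := by
    obtain ⟨⟨rfl, rfl⟩ | ⟨rfl, rfl⟩, -⟩ := (SimpleGraph.edge_adj ..).1 hab
    exacts [hT, hT.symm]
  arc_inter_arc he hf hne := by
    have h := SimpleGraph.edgeSet_edge_of_ne (fun h => hyz (congrArg pos h))
    rw [h] at he hf
    exact absurd (he.trans hf.symm) hne
  mem_of_pos_mem_arc he hw _ := by
    have h := SimpleGraph.edgeSet_edge_of_ne (fun h => hyz (congrArg pos h))
    rw [h] at he
    obtain rfl := he
    simpa using hw

/-- The edges `x y`, `x z`, `y z` are drawn as the sides of the triangle `a b c`, whose interior the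
drawing does not meet. -/
structure IsTriangle (D : PlaneDrawing G S) (x y z : V) (a b c : ℂ) : Prop where
  pos_x : D.pos x = a
  pos_y : D.pos y = b
  pos_z : D.pos z = c
  arc_xy : D.arc s(x, y) = segment ℝ a b
  arc_xz : D.arc s(x, z) = segment ℝ a c
  arc_yz : D.arc s(y, z) = segment ℝ b c
  affineIndependent : AffineIndependent ℝ ![a, b, c]
  disjoint : Disjoint (interior (convexHull ℝ {a, b, c})) (D.part S G.edgeSet)

lemma IsTriangle.swap (h : D.IsTriangle x y z a b c) : D.IsTriangle y x z b a c where
  pos_x := h.pos_y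
  pos_y := h.pos_x
  pos_z := h.pos_z
  arc_xy := by rw [Sym2.eq_swap, h.arc_xy, segment_symm]
  arc_xz := h.arc_yz
  arc_yz := h.arc_xz
  affineIndependent := h.affineIndependent.comm_left
  disjoint := by rw [insert_comm]; exact h.disjoint

lemma IsTriangle.image (h : D.IsTriangle x y z a b c) (φ : ℂ ≃ᵃ[ℝ] ℂ) :
    (D.image φ φ.continuous_of_finiteDimensional.continuousOn φ.injective.injOn).IsTriangle
      x y z (φ a) (φ b) (φ c) where
  pos_x := congrArg φ h.pos_x
  pos_y := congrArg φ h.pos_y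
  pos_z := congrArg φ h.pos_z
  arc_xy := (congrArg (φ '' ·) h.arc_xy).trans (image_segment ℝ φ.toAffineMap a b)
  arc_xz := (congrArg (φ '' ·) h.arc_xz).trans (image_segment ℝ φ.toAffineMap a c)
  arc_yz := (congrArg (φ '' ·) h.arc_yz).trans (image_segment ℝ φ.toAffineMap b c)
  affineIndependent := by
    convert φ.affineIndependent_iff.2 h.affineIndependent using 1
    ext i
    fin_cases i <;> rfl
  disjoint := by
    have hhull : convexHull ℝ {φ a, φ b, φ c} = φ '' convexHull ℝ {a, b, c} := by
      rw [← AffineEquiv.coe_toAffineMap, AffineMap.image_convexHull]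
      simp [image_insert_eq]
    have hint : interior (φ '' convexHull ℝ {a, b, c}) = φ '' interior (convexHull ℝ {a, b, c}) :=
      ((AffineEquiv.toContinuousAffineEquiv φ).toHomeomorph.image_interior _).symm
    rw [hhull, hint, part_image, disjoint_image_iff φ.injective]
    exact h.disjoint

lemma disjoint_interior_convexHull {A : Set ℂ}
    (h : ∀ p ∈ A, ρ ≤ ‖p‖ ∨ p.re ≤ 0 ∨ p.im ≤ 0) (hρ : 0 < ρ) :
    Disjoint (interior (convexHull ℝ {0, ρ • (1 : ℂ), ρ • Complex.I})) A := by
  have hball : convexHull ℝ {0, ρ • (1 : ℂ), ρ • Complex.I} ⊆ Metric.closedBall 0 ρ :=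
    convexHull_min (by simp [insert_subset_iff, hρ.le, abs_of_pos hρ]) (convex_closedBall 0 ρ)
  have hre : convexHull ℝ {0, ρ • (1 : ℂ), ρ • Complex.I} ⊆ {p | 0 ≤ p.re} :=
    convexHull_min (by simp [insert_subset_iff, hρ.le]) (convex_halfSpace_re_ge 0)
  have him : convexHull ℝ {0, ρ • (1 : ℂ), ρ • Complex.I} ⊆ {p | 0 ≤ p.im} :=
    convexHull_min (by simp [insert_subset_iff, hρ.le]) (convex_halfSpace_im_ge 0)
  rw [Set.disjoint_left]
  intro p hp hpA
  have h1 := interior_mono hball hp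
  have h2 := interior_mono hre hp
  have h3 := interior_mono him hp
  rw [interior_closedBall _ hρ.ne', mem_ball_zero_iff] at h1
  rw [Complex.interior_setOfPred_le_re] at h2
  rw [Complex.interior_setOfPred_le_im] at h3
  rcases h p hpA with h | h | h
  exacts [h.not_gt h1, h.not_gt h2, h.not_gt h3]

lemma eq_or_eq_of_mem_hypotenuse (hρ : 0 < ρ) {p : ℂ}
    (hp : p ∈ segment ℝ (ρ • (1 : ℂ)) (ρ • Complex.I)) (h : ρ ≤ ‖p‖ ∨ p.re ≤ 0 ∨ p.im ≤ 0) :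
    p = ρ • (1 : ℂ) ∨ p = ρ • Complex.I := by
  obtain ⟨s, t, hs, ht, hst, rfl⟩ := hp
  suffices hzero : s = 0 ∨ t = 0 by
    rcases hzero with rfl | rfl
    · exact Or.inr (by simp_all)
    · exact Or.inl (by simp_all)
  rcases h with h | h | h
  · have hsq : ρ ^ 2 ≤ ρ ^ 2 * (s ^ 2 + t ^ 2) := by
      have := pow_le_pow_left₀ hρ.le h 2
      rw [Complex.sq_norm, Complex.normSq_apply] at this
      simpa [mul_add, mul_pow, ← sq, mul_comm] using this
    have hone : (s + t) ^ 2 ≤ s ^ 2 + t ^ 2 := by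
      rw [hst, one_pow]
      exact (le_mul_iff_one_le_right (pow_pos hρ 2)).1 hsq
    have hst0 : s * t ≤ 0 := by linarith [add_sq s t]
    exact mul_eq_zero.1 (hst0.antisymm (mul_nonneg hs ht))
  · have hre : s * ρ ≤ 0 := by simpa using h
    exact Or.inl ((nonpos_of_mul_nonpos_left hre hρ).antisymm hs)
  · have him : t * ρ ≤ 0 := by simpa using h
    exact Or.inr ((nonpos_of_mul_nonpos_left him hρ).antisymm ht)

lemma IsRightAngle.exists_isTriangle (h : D.IsRightAngle x y z ρ) (hρ : 0 < ρ) (hxy : G.Adj x y)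
    (hxz : G.Adj x z) (hyz : y ≠ z) (hn : ¬ G.Adj y z) :
    ∃ D' : PlaneDrawing (G ⊔ SimpleGraph.edge y z) S,
      D'.IsTriangle x y z 0 (ρ • (1 : ℂ)) (ρ • Complex.I) := by
  have hy : y ∈ S := D.adj_mem hxy.symm
  have hz : z ∈ S := D.adj_mem hxz.symm
  have haff : AffineIndependent ℝ ![0, ρ • (1 : ℂ), ρ • Complex.I] := by
    rw [affineIndependent_iff_linearIndependent_pair, LinearIndependent.pair_iff]
    intro s t hst
    simpa [Complex.ext_iff, hρ.ne'] using hst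
  have hne : D.pos y ≠ D.pos z := fun h => hyz (D.injOn_pos hy hz h)
  have hpair : ({y, z} : Set V) ⊆ S := insert_subset hy (singleton_subset_iff.2 hz)
  have hT : IsArc (D.pos y) (D.pos z) (segment ℝ (ρ • (1 : ℂ)) (ρ • Complex.I)) := by
    rw [← h.pos_y, ← h.pos_z]
    exact isArc_segment hne
  have hpart : (singleEdge hT hne).part {y, z} (SimpleGraph.edge y z).edgeSet ⊆
      segment ℝ (ρ • (1 : ℂ)) (ρ • Complex.I) := by
    intro p hp
    rcases (mem_part _).1 hp with ⟨w, rfl | rfl, rfl⟩ | ⟨_, _, hp'⟩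
    exacts [hT.left_mem, hT.right_mem, hp']
  suffices ∃ D' : PlaneDrawing (G ⊔ SimpleGraph.edge y z) (S ∪ {y, z}),
      D'.IsTriangle x y z 0 (ρ • (1 : ℂ)) (ρ • Complex.I) by
    rwa [union_eq_left.2 hpair] at this
  refine ⟨D.glue (singleEdge hT hne) rfl fun p hp => ?_, h.pos_x, h.pos_y, h.pos_z,
    (arc_glue_of_mem _ _ hxy).trans h.arc_xy, (arc_glue_of_mem _ _ hxz).trans h.arc_xz,
    arc_glue_of_notMem _ _ hn, haff, ?_⟩
  · rw [inter_eq_right.2 hpair, image_pair, h.pos_y, h.pos_z]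
    exact eq_or_eq_of_mem_hypotenuse hρ (hpart hp.2) (h.le_norm_or p hp.1)
  · refine Disjoint.mono_right (part_glue_subset _ _) (disjoint_union_right.2 ⟨?_, ?_⟩)
    · exact disjoint_interior_convexHull h.le_norm_or hρ
    · exact ((disjoint_segment_interior_convexHull haff).mono_left hpart).symm

end PlaneDrawing

/-! ### Gluing two drawings along a triangle -/

section GaugeInversion

variable {E : Type*} [NormedAddCommGroup E] [NormedSpace ℝ E] {K : Set E} {p : E}

/-- The inversion in the boundary of the set `K`: it moves `p` along its ray from the origin and
replaces the value of the Minkowski functional of `K` at `p` by its inverse. -/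
noncomputable def gaugeInversion (K : Set E) (p : E) : E :=
  (gauge K p)⁻¹ ^ 2 • p

lemma gauge_gaugeInversion (K : Set E) (p : E) : gauge K (gaugeInversion K p) = (gauge K p)⁻¹ := by
  rw [gaugeInversion, gauge_smul_of_nonneg (sq_nonneg _), smul_eq_mul]
  by_cases h : gauge K p = 0
  · simp [h]
  · field_simp

lemma gaugeInversion_gaugeInversion (h : gauge K p ≠ 0) :
    gaugeInversion K (gaugeInversion K p) = p := by
  rw [gaugeInversion, gauge_gaugeInversion, gaugeInversion, smul_smul, ← mul_pow,
    inv_inv, mul_inv_cancel₀ h, one_pow, one_smul]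

lemma gaugeInversion_of_gauge_eq_one (h : gauge K p = 1) : gaugeInversion K p = p := by
  rw [gaugeInversion, h, inv_one, one_pow, one_smul]

lemma injOn_gaugeInversion : InjOn (gaugeInversion K) {p | gauge K p ≠ 0} :=
  LeftInvOn.injOn fun _ => gaugeInversion_gaugeInversion

lemma continuousOn_gaugeInversion (hc : Convex ℝ K) (h0 : K ∈ nhds 0) :
    ContinuousOn (gaugeInversion K) {p | gauge K p ≠ 0} :=
  (((continuous_gauge hc h0).continuousOn.inv₀ fun _ hp => hp).pow 2).smul continuousOn_id

lemma one_le_gauge_of_disjoint_interior {A : Set E} (hc : Convex ℝ K) (h0 : K ∈ nhds 0)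
    (h : Disjoint (interior K) A) : ∀ p ∈ A, 1 ≤ gauge K p := fun p hp => by
  by_contra! hlt
  exact h.notMem_of_mem_left ((gauge_lt_one_iff_mem_interior hc h0).1 hlt) hp

end GaugeInversion

namespace PlaneDrawing

variable {V : Type u} {G₁ G₂ : SimpleGraph V} {S₁ S₂ : Set V} {D₁ : PlaneDrawing G₁ S₁}
  {D₂ : PlaneDrawing G₂ S₂} {x y z : V} {a b c : ℂ}

lemma nonempty_sup (hpos : EqOn D₁.pos D₂.pos (S₁ ∩ S₂))
    (hmeet : D₁.part S₁ G₁.edgeSet ∩ D₂.part S₂ G₂.edgeSet ⊆ D₁.pos '' (S₁ ∩ S₂)) :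
    Nonempty (PlaneDrawing (G₁ ⊔ G₂) (S₁ ∪ S₂)) := by
  classical
  have h₁ : EqOn (S₁.piecewise D₁.pos D₂.pos) D₁.pos S₁ := piecewise_eqOn _ _ _
  have h₂ : EqOn (S₁.piecewise D₁.pos D₂.pos) D₂.pos S₂ := fun w hw => by
    by_cases hw₁ : w ∈ S₁
    · exact (h₁ hw₁).trans (hpos ⟨hw₁, hw⟩)
    · exact piecewise_eq_of_notMem _ _ _ hw₁
  refine ⟨(D₁.withPos h₁).glue (D₂.withPos h₂) rfl ?_⟩
  rw [part_withPos, part_withPos]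
  exact hmeet.trans (h₁.mono inter_subset_left).image_eq.ge

lemma exists_pos_eq_of_mem_part_of_mem_arc {G : SimpleGraph V} {S : Set V} (D : PlaneDrawing G S)
    {F : Set (Sym2 V)} (hF : F ⊆ G.edgeSet) {e : Sym2 V} (he : e ∈ G.edgeSet) (heF : e ∉ F) {p : ℂ}
    (hp : p ∈ D.part S F) (hpe : p ∈ D.arc e) : ∃ k ∈ e, D.pos k = p := by
  rcases D.mem_part.1 hp with ⟨w, hw, rfl⟩ | ⟨f, hf, hpf⟩
  · exact ⟨w, D.mem_of_pos_mem_arc he hw hpe, rfl⟩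
  · obtain ⟨k, hk, -, hkp⟩ :=
      D.exists_common_end he (hF hf) (ne_of_mem_of_not_mem hf heF).symm hpe hpf
    exact ⟨k, hk, hkp⟩

lemma IsTriangle.eqOn_pos (h₁ : D₁.IsTriangle x y z a b c) (h₂ : D₂.IsTriangle x y z a b c) :
    EqOn D₁.pos D₂.pos {x, y, z} := by
  rintro _ (rfl | rfl | rfl)
  exacts [h₁.pos_x.trans h₂.pos_x.symm, h₁.pos_y.trans h₂.pos_y.symm, h₁.pos_z.trans h₂.pos_z.symm]

-- The triangle is empty in `D₂`, so inverting in its boundary moves all of `D₂` inside it.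
lemma IsTriangle.exists_inverted (h : D₂.IsTriangle x y z a b c)
    (h0 : convexHull ℝ {a, b, c} ∈ nhds 0) (hS : {x, y, z} ⊆ S₂) :
    ∃ D : PlaneDrawing G₂ S₂, EqOn D₂.pos D.pos {x, y, z} ∧
      ∀ F ⊆ G₂.edgeSet, ∀ p ∈ D.part S₂ F, gauge (convexHull ℝ {a, b, c}) p ≤ 1 ∧
        (gauge (convexHull ℝ {a, b, c}) p = 1 → p ∈ D₂.part S₂ F) := by
  set K := convexHull ℝ {a, b, c}
  have hc : Convex ℝ K := convex_convexHull _ _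
  have hge := one_le_gauge_of_disjoint_interior hc h0 h.disjoint
  have hne : D₂.part S₂ G₂.edgeSet ⊆ {p | gauge K p ≠ 0} := fun p hp =>
    (one_pos.trans_le (hge p hp)).ne'
  refine ⟨D₂.image (gaugeInversion K) ((continuousOn_gaugeInversion hc h0).mono hne)
    (injOn_gaugeInversion.mono hne), fun k hk => ?_, fun F hF p hp => ?_⟩
  · have hmem : D₂.pos k ∈ K := subset_convexHull ℝ {a, b, c} <| by
      rcases hk with rfl | rfl | rfl
      exacts [by simp [h.pos_x], by simp [h.pos_y], by simp [h.pos_z]]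
    have hone := (gauge_le_one_of_mem hmem).antisymm (hge _ (pos_mem_part (hS hk)))
    exact (gaugeInversion_of_gauge_eq_one hone).symm
  · rw [part_image] at hp
    obtain ⟨q, hq, rfl⟩ := hp
    have hq1 : 1 ≤ gauge K q :=
      hge q (union_subset_union_right _ (biUnion_subset_biUnion_left hF) hq)
    rw [gauge_gaugeInversion, inv_eq_one]
    exact ⟨inv_le_one_of_one_le₀ hq1, fun hone => (gaugeInversion_of_gauge_eq_one hone).symm ▸ hq⟩

lemma IsTriangle.exists_standard {G : SimpleGraph V} {S : Set V} {D : PlaneDrawing G S}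
    (h : D.IsTriangle x y z a b c) :
    ∃ D' : PlaneDrawing G S, D'.IsTriangle x y z (-1 - Complex.I) 1 Complex.I := by
  obtain ⟨φ, hφa, hφb, hφc, -⟩ := exists_affineEquiv_of_affineIndependent h.affineIndependent
  exact ⟨_, hφa ▸ hφb ▸ hφc ▸ h.image φ⟩

variable (hxy : G₂.Adj x y) (hxz : G₂.Adj x z) (hyz : G₂.Adj y z)
include hxy hxz hyz

lemma IsTriangle.exists_pos_eq_of_mem_frontier (h : D₂.IsTriangle x y z a b c)
    {F : Set (Sym2 V)} (hF : F ⊆ G₂.edgeSet) (hdisj : Disjoint F {s(x, y), s(x, z), s(y, z)})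
    {p : ℂ} (hp : p ∈ frontier (convexHull ℝ {a, b, c})) (hpF : p ∈ D₂.part S₂ F) :
    ∃ k ∈ ({x, y, z} : Set V), D₂.pos k = p := by
  have main {u v : V} (huv : G₂.Adj u v) (he : s(u, v) ∉ F) (hpe : p ∈ D₂.arc s(u, v)) :
      D₂.pos u = p ∨ D₂.pos v = p := by
    simpa using D₂.exists_pos_eq_of_mem_part_of_mem_arc hF huv he hpF hpe
  simp only [disjoint_insert_right, disjoint_singleton_right] at hdisj
  simp only [mem_insert_iff, mem_singleton_iff, exists_eq_or_imp, exists_eq_left]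
  rcases frontier_convexHull_subset h.affineIndependent hp with (hp | hp) | hp
  · have := main hxy hdisj.1 (h.arc_xy ▸ hp)
    tauto
  · have := main hxz hdisj.2.1 (h.arc_xz ▸ hp)
    tauto
  · have := main hyz hdisj.2.2 (h.arc_yz ▸ hp)
    tauto

lemma IsTriangle.nonempty_sup (h₁ : D₁.IsTriangle x y z a b c) (h₂ : D₂.IsTriangle x y z a b c)
    (h0 : convexHull ℝ {a, b, c} ∈ nhds 0) (hS : S₁ ∩ S₂ = {x, y, z}) (hxy₁ : G₁.Adj x y)
    (hxz₁ : G₁.Adj x z) (hyz₁ : G₁.Adj y z) : Nonempty (PlaneDrawing (G₁ ⊔ G₂) (S₁ ∪ S₂)) := by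
  obtain ⟨D, hD, hpart⟩ := h₂.exists_inverted h0 (hS ▸ inter_subset_right)
  have hpos : EqOn D₁.pos D.pos (S₁ ∩ S₂) := hS ▸ (h₁.eqOn_pos h₂).trans hD
  have hge := one_le_gauge_of_disjoint_interior (convex_convexHull _ _) h0 h₁.disjoint
  have hdisj : Disjoint (G₂ \ G₁).edgeSet {s(x, y), s(x, z), s(y, z)} := by
    simp [disjoint_insert_right, hxy₁, hxz₁, hyz₁]
  have hsub : (G₂ \ G₁).edgeSet ⊆ G₂.edgeSet := SimpleGraph.edgeSet_mono sdiff_le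
  suffices Nonempty (PlaneDrawing (G₁ ⊔ G₂ \ G₁) (S₁ ∪ S₂)) by rwa [sup_sdiff_self_right] at this
  refine PlaneDrawing.nonempty_sup (D₂ := D.mono sdiff_le) hpos ?_
  rintro p ⟨hp₁, hp₂⟩
  obtain ⟨hle, hmem⟩ := hpart _ hsub p hp₂
  have hone := hle.antisymm (hge p hp₁)
  obtain ⟨k, hk, rfl⟩ := h₂.exists_pos_eq_of_mem_frontier hxy hxz hyz hsub hdisj
    ((gauge_eq_one_iff_mem_frontier (convex_convexHull _ _) h0).1 hone) (hmem hone)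
  exact ⟨k, hS ▸ hk, h₁.eqOn_pos h₂ hk⟩

lemma nonempty_sup_of_isTriangle {a' b' c' : ℂ} (h₁ : D₁.IsTriangle x y z a b c)
    (h₂ : D₂.IsTriangle x y z a' b' c') (hS : S₁ ∩ S₂ = {x, y, z}) (hxy₁ : G₁.Adj x y)
    (hxz₁ : G₁.Adj x z) (hyz₁ : G₁.Adj y z) : Nonempty (PlaneDrawing (G₁ ⊔ G₂) (S₁ ∪ S₂)) := by
  obtain ⟨_, h₁'⟩ := h₁.exists_standard
  obtain ⟨_, h₂'⟩ := h₂.exists_standard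
  exact h₁'.nonempty_sup hxy hxz hyz h₂'
    (convexHull_mem_nhds_centroid h₁'.affineIndependent (by rw [smul_zero]; ring)) hS hxy₁ hxz₁ hyz₁

end PlaneDrawing

namespace PlaneDrawing

variable {V : Type u} {G : SimpleGraph V} {S : Set V} {x y z i : V}

lemma exists_isTriangle [Finite V] (D : PlaneDrawing G S)
    (hx : ∀ w, G.Adj x w ↔ w = y ∨ w = z ∨ w = i) (hyz : G.Adj y z) (hyi : y ≠ i) (hzi : z ≠ i) :
    ∃ (D' : PlaneDrawing G S) (a b c : ℂ), D'.IsTriangle x y z a b c := by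
  have hxy : G.Adj x y := (hx y).2 (Or.inl rfl)
  have hxz : G.Adj x z := (hx z).2 (Or.inr (Or.inl rfl))
  have hle : SimpleGraph.edge y z ≤ G := (SimpleGraph.edge_le_iff ..).2 (Or.inr hyz)
  have hx' : ∀ w, (G \ SimpleGraph.edge y z).Adj x w ↔ w = y ∨ w = z ∨ w = i := fun w => by
    rw [SimpleGraph.sdiff_adj, hx, SimpleGraph.edge_adj]
    simp [hxy.ne, hxz.ne]
  obtain ⟨D₁, δ, hδ, h₁⟩ := (D.mono sdiff_le).exists_isCorner hx' hyz.ne hyi hzi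
  have hyz' : ¬ (G \ SimpleGraph.edge y z).Adj y z := fun h =>
    h.2 ((SimpleGraph.edge_adj ..).2 ⟨Or.inl ⟨rfl, rfl⟩, hyz.ne⟩)
  have hxy' := (hx' y).2 (Or.inl rfl)
  have hxz' := (hx' z).2 (Or.inr (Or.inl rfl))
  obtain ⟨D₂, ρ, hρ, h₂⟩ := h₁.exists_isRightAngle hδ hxy' hxz' hyz.ne hyz'
  have h₃ := h₂.exists_isTriangle hρ hxy' hxz' hyz.ne hyz'
  rw [sdiff_sup_cancel hle] at h₃
  obtain ⟨D₃, h₃⟩ := h₃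
  exact ⟨D₃, _, _, _, h₃⟩

/-- The drawing of the image of a graph under an embedding of its vertex set. -/
noncomputable def map {W : Type*} (f : V ↪ W) (D : PlaneDrawing G S) :
    PlaneDrawing (G.map f) (f '' S) :=
  have pos_apply (w : V) : Function.extend f D.pos 0 (f w) = D.pos w := f.injective.extend_apply ..
  have arc_apply (e : Sym2 V) :
      Function.extend f.sym2Map D.arc (fun _ => ∅) (f.sym2Map e) = D.arc e :=
    f.sym2Map.injective.extend_apply ..
  { pos := Function.extend f D.pos 0
    arc := Function.extend f.sym2Map D.arc fun _ => ∅
    adj_mem := by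
      rintro _ _ ⟨-, a, b, h, rfl, rfl⟩
      exact mem_image_of_mem f (D.adj_mem h)
    injOn_pos := by
      rintro _ ⟨a, ha, rfl⟩ _ ⟨b, hb, rfl⟩ h
      rw [pos_apply, pos_apply] at h
      rw [D.injOn_pos ha hb h]
    isArc := by
      rintro _ _ ⟨-, a, b, h, rfl, rfl⟩
      rw [pos_apply, pos_apply]
      exact (arc_apply s(a, b)).symm ▸ D.isArc h
    arc_inter_arc := by
      rw [SimpleGraph.edgeSet_map]
      rintro _ _ ⟨e, he, rfl⟩ ⟨e', he', rfl⟩ hne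
      rw [arc_apply, arc_apply, image_image]
      simp only [pos_apply]
      exact D.arc_inter_arc he he' (ne_of_apply_ne _ hne)
    mem_of_pos_mem_arc := by
      rw [SimpleGraph.edgeSet_map]
      rintro _ _ ⟨e, he, rfl⟩ ⟨w, hw, rfl⟩ h
      rw [arc_apply, pos_apply] at h
      exact Sym2.mem_map.2 ⟨w, D.mem_of_pos_mem_arc he hw h, rfl⟩ }

lemma isPlanar (D : PlaneDrawing G univ) : G.IsPlanar := by
  let φ : ℂ ≃L[ℝ] ℝ × ℝ := Complex.equivRealProdCLM
  refine ⟨φ ∘ D.pos, φ.injective.comp (injOn_univ.1 D.injOn_pos), fun u v _ => φ '' D.arc s(u, v),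
    fun u v _ => by rw [Sym2.eq_swap], fun u v h => ?_, fun u v w z h₁ h₂ hne => ?_,
    fun u v h w hw => ?_⟩
  · exact ((D.isArc h).image φ.continuous.continuousOn φ.injective.injOn).exists_continuousOn
  · rintro _ ⟨⟨p, hp₁, rfl⟩, hp₂⟩
    rw [φ.injective.mem_set_image] at hp₂
    obtain ⟨k, hk₁, hk₂, rfl⟩ := D.exists_common_end h₁ h₂ hne hp₁ hp₂
    exact ⟨(Sym2.mem_iff.1 hk₁).imp (congrArg (φ ∘ D.pos)) (congrArg (φ ∘ D.pos)),
      (Sym2.mem_iff.1 hk₂).imp (congrArg (φ ∘ D.pos)) (congrArg (φ ∘ D.pos))⟩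
  · exact Sym2.mem_iff.1
      (D.mem_of_pos_mem_arc h (mem_univ w) (φ.injective.mem_set_image.1 hw))

end PlaneDrawing

namespace PlaneEmbedding

variable {V : Type u} {G : SimpleGraph V} (E : PlaneEmbedding G)

lemma isArc_arc {u v : V} (h : G.Adj u v) : IsArc (E.pos u) (E.pos v) (E.arc h) := by
  obtain ⟨f, hf, hinj, h0, h1, himage⟩ := E.arc_curve h
  exact h0 ▸ h1 ▸ himage ▸ isArc_of_continuousOn hf hinj

lemma arc_congr {u v u' v' : V} (h : G.Adj u v) (h' : G.Adj u' v') (he : s(u, v) = s(u', v')) :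
    E.arc h = E.arc h' := by
  obtain ⟨rfl, rfl⟩ | ⟨rfl, rfl⟩ := Sym2.eq_iff.1 he
  exacts [rfl, E.arc_symm h']

/-- The embedding as a drawing in the complex plane. -/
noncomputable def toPlaneDrawing : PlaneDrawing G univ :=
  let φ : (ℝ × ℝ) ≃L[ℝ] ℂ := Complex.equivRealProdCLM.symm
  let arc (e : Sym2 V) : Set ℂ := {p | ∃ (u v : V) (h : G.Adj u v), s(u, v) = e ∧ p ∈ φ '' E.arc h}
  have arc_mk {u v : V} (h : G.Adj u v) : arc s(u, v) = φ '' E.arc h := by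
    ext p
    refine ⟨?_, fun hp => ⟨u, v, h, rfl, hp⟩⟩
    rintro ⟨u', v', h', he, hp⟩
    rwa [← E.arc_congr h' h he]
  { pos := φ ∘ E.pos
    arc := arc
    adj_mem := fun _ => mem_univ _
    injOn_pos := (φ.injective.comp E.pos_inj).injOn
    isArc {u v} h := by
      rw [arc_mk h]
      exact (E.isArc_arc h).image φ.continuous.continuousOn φ.injective.injOn
    arc_inter_arc := by
      rintro ⟨u, v⟩ ⟨u', v'⟩ (h : G.Adj u v) (h' : G.Adj u' v') hne
      change arc s(u, v) ∩ arc s(u', v') ⊆ _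
      rw [arc_mk h, arc_mk h', ← image_inter φ.injective, image_univ, range_comp]
      refine image_mono ((E.arc_inter h h' hne).trans (inter_subset_left.trans ?_))
      rintro _ (rfl | rfl) <;> exact mem_range_self _
    mem_of_pos_mem_arc := by
      rintro ⟨u, v⟩ w (h : G.Adj u v) - hw
      change _ ∈ arc s(u, v) at hw
      rw [arc_mk h, Function.comp_apply, φ.injective.mem_set_image] at hw
      exact Sym2.mem_iff.2 (E.pos_arc h w hw) }

lemma nonempty_planeDrawing_spanningCoe {S : Set V} {H : SimpleGraph S} (E : PlaneEmbedding H) :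
    Nonempty (PlaneDrawing H.spanningCoe S) := by
  have D : PlaneDrawing H.spanningCoe (Subtype.val '' univ) :=
    E.toPlaneDrawing.map (.subtype (· ∈ S))
  rw [image_univ, Subtype.range_coe] at D
  exact ⟨D⟩

end PlaneEmbedding

/-! ### Cyclic orderings -/

section CyclicOrder

variable {W : Type u} {σ : ZMod (Nat.card W) ≃ W} {x y z w : W}

lemma cyclicSuccGraph_adj :
    (cyclicSuccGraph σ).Adj x y ↔ x ≠ y ∧ s(x, y) ∈ cycleEdges σ := by
  rw [cyclicSuccGraph, SimpleGraph.fromRel_adj, ← exists_or]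
  simp only [cycleEdges, mem_ofPred_eq, Sym2.eq_iff, and_comm (a := y = σ _)]

lemma mk_apply_mem_cycleEdges {k : ZMod (Nat.card W)} :
    s(σ k, w) ∈ cycleEdges σ ↔ w = σ (k + 1) ∨ w = σ (k - 1) := by
  constructor
  · rintro ⟨i, hi⟩
    obtain ⟨hk, hw⟩ | ⟨hk, hw⟩ := Sym2.eq_iff.1 hi
    · exact Or.inl (by rw [hw, σ.injective hk])
    · exact Or.inr (by rw [hw, σ.injective hk, add_sub_cancel_right])
  · rintro (rfl | rfl)
    · exact ⟨k, rfl⟩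
    · exact ⟨k - 1, by rw [sub_add_cancel, Sym2.eq_swap]⟩

lemma mk_mem_cycleEdges_iff (hy : s(x, y) ∈ cycleEdges σ) (hz : s(x, z) ∈ cycleEdges σ)
    (hyz : y ≠ z) : s(x, w) ∈ cycleEdges σ ↔ w = y ∨ w = z := by
  obtain ⟨k, rfl⟩ := σ.surjective x
  rw [mk_apply_mem_cycleEdges] at hy hz ⊢
  grind

lemma sup_cyclicSuccGraph_adj {G : SimpleGraph W} (hy : s(x, y) ∈ cycleEdges σ)
    (hz : s(x, z) ∈ cycleEdges σ) (hyz : y ≠ z) (hxy : G.Adj x y) (hxz : G.Adj x z) :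
    (G ⊔ cyclicSuccGraph σ).Adj x w ↔ G.Adj x w := by
  rw [SimpleGraph.sup_adj, cyclicSuccGraph_adj, mk_mem_cycleEdges_iff hy hz hyz,
    or_iff_left_iff_imp]
  rintro ⟨-, rfl | rfl⟩ <;> assumption

lemma mk_mem_cycleEdges_of_card_eq_three (h : Nat.card W = 3) (hxy : x ≠ y) :
    s(x, y) ∈ cycleEdges σ := by
  have key : ∀ n, n = 3 → ∀ i j : ZMod n, i ≠ j → j = i + 1 ∨ j = i - 1 := by
    rintro _ rfl
    decide
  obtain ⟨i, rfl⟩ := σ.surjective x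
  obtain ⟨j, rfl⟩ := σ.surjective y
  exact mk_apply_mem_cycleEdges.2
    ((key _ h i j (ne_of_apply_ne σ hxy)).imp (congrArg σ) (congrArg σ))

lemma mk_mem_image_cycleEdges {V : Type u} {S : Set V} {σ : ZMod (Nat.card S) ≃ S} {u v : V} :
    s(u, v) ∈ Sym2.map Subtype.val '' cycleEdges σ ↔
      ∃ (hu : u ∈ S) (hv : v ∈ S), s((⟨u, hu⟩ : S), ⟨v, hv⟩) ∈ cycleEdges σ := by
  constructor
  · rintro ⟨⟨u', v'⟩, h, he⟩
    obtain ⟨rfl, rfl⟩ | ⟨rfl, rfl⟩ := Sym2.eq_iff.1 he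
    · exact ⟨u'.2, v'.2, h⟩
    · exact ⟨v'.2, u'.2, Sym2.eq_swap ▸ h⟩
  · rintro ⟨hu, hv, h⟩
    exact ⟨_, h, rfl⟩

lemma exists_walk_support_eq_map_range {G : SimpleGraph W} (f : ℕ → W) (m : ℕ)
    (hf : ∀ j < m, G.Adj (f j) (f (j + 1))) :
    ∃ p : G.Walk (f 0) (f m), p.support = (List.range (m + 1)).map f := by
  induction m with
  | zero => exact ⟨.nil, rfl⟩
  | succ m ih =>
    obtain ⟨p, hp⟩ := ih fun j hj => hf j (hj.trans m.lt_succ_self)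
    refine ⟨p.concat (hf m m.lt_succ_self), ?_⟩
    rw [SimpleGraph.Walk.support_concat, hp, List.range_succ (n := m + 1), List.map_append,
      List.map_singleton]

lemma exists_lt_add_natCast_eq_iff {n : ℕ} [NeZero n] {k t : ZMod n} :
    (∃ j < n - 1, k + 1 + (j : ZMod n) = t) ↔ t ≠ k := by
  constructor
  · rintro ⟨j, hj, rfl⟩ h
    have hdvd : n ∣ j + 1 := by
      rw [← ZMod.natCast_eq_zero_iff, Nat.cast_succ]
      linear_combination h
    have := Nat.le_of_dvd j.succ_pos hdvd
    omega
  · intro ht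
    have hval := ZMod.natCast_zmod_val (t - k - 1)
    have hlt := ZMod.val_lt (t - k - 1)
    refine ⟨(t - k - 1).val, lt_of_le_of_ne (by omega) fun h => ht ?_, by rw [hval]; ring⟩
    have hcard : (((t - k - 1).val + 1 : ℕ) : ZMod n) = (n : ℕ) := congrArg Nat.cast (by omega)
    rw [Nat.cast_succ, hval, ZMod.natCast_self] at hcard
    linear_combination hcard

lemma exists_isPath_cyclicSuccGraph [Finite W] [Nontrivial W] (k : ZMod (Nat.card W)) :
    ∃ p : (cyclicSuccGraph σ).Walk (σ (k + 1)) (σ (k - 1)), p.IsPath ∧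
      ∀ v, v ∈ p.support ↔ v ≠ σ k := by
  have hcard : 1 < Nat.card W := Finite.one_lt_card
  have : NeZero (Nat.card W) := ⟨by omega⟩
  have : Fact (1 < Nat.card W) := ⟨hcard⟩
  obtain ⟨p, hp⟩ := exists_walk_support_eq_map_range (G := cyclicSuccGraph σ)
    (fun j : ℕ => σ (k + 1 + j)) (Nat.card W - 2) fun j _ => by
      rw [cyclicSuccGraph_adj, mk_apply_mem_cycleEdges]
      exact ⟨σ.injective.ne (by simp), Or.inl (by push_cast; ring_nf)⟩
  have hlength : Nat.card W - 2 + 1 = Nat.card W - 1 := by omega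
  have hstart : σ (k + 1 + (0 : ℕ)) = σ (k + 1) := by simp
  have hend : σ (k + 1 + (Nat.card W - 2 : ℕ)) = σ (k - 1) := by
    rw [Nat.cast_sub hcard, ZMod.natCast_self]
    congr 1
    push_cast
    ring
  refine ⟨p.copy hstart hend, ?_, fun v => ?_⟩
  · rw [SimpleGraph.Walk.isPath_copy, SimpleGraph.Walk.isPath_def, hp, hlength]
    refine List.nodup_range.map_on fun i hi j hj h =>
      CharP.natCast_injOn_Iio (ZMod (Nat.card W)) (Nat.card W) ?_ ?_
        (add_left_cancel (σ.injective h))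
    · exact (List.mem_range.1 hi).trans_le (Nat.sub_le ..)
    · exact (List.mem_range.1 hj).trans_le (Nat.sub_le ..)
  · obtain ⟨t, rfl⟩ := σ.surjective v
    rw [SimpleGraph.Walk.support_copy, hp, hlength, σ.injective.ne_iff,
      ← exists_lt_add_natCast_eq_iff]
    simp only [List.mem_map, List.mem_range, σ.injective.eq_iff]

lemma exists_isPath_of_mem_cycleEdges [Finite W] (hy : s(x, y) ∈ cycleEdges σ)
    (hz : s(x, z) ∈ cycleEdges σ) (hyz : y ≠ z) :
    ∃ p : (cyclicSuccGraph σ).Walk y z, p.IsPath ∧ ∀ v, v ∈ p.support ↔ v ≠ x := by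
  have : Nontrivial W := ⟨y, z, hyz⟩
  obtain ⟨k, rfl⟩ := σ.surjective x
  obtain ⟨p, hp, hs⟩ := exists_isPath_cyclicSuccGraph (σ := σ) k
  rw [mk_apply_mem_cycleEdges] at hy hz
  rcases hy with rfl | rfl <;> rcases hz with rfl | rfl
  · exact absurd rfl hyz
  · exact ⟨p, hp, hs⟩
  · exact ⟨p.reverse, hp.reverse, by simpa using hs⟩
  · exact absurd rfl hyz

end CyclicOrder

lemma isHamiltonian_of_isPath {V : Type u} [Fintype V] [DecidableEq V] {G : SimpleGraph V}
    {x y z : V} {p : G.Walk y z} {q : G.Walk z x} (hp : p.IsPath) (hq : q.IsPath)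
    (hxy : G.Adj x y) (hxz : x ≠ z) (hyz : y ≠ z)
    (hmeet : ∀ v ∈ p.support, v ∈ q.support → v = z)
    (hcover : ∀ v, v ∈ p.support ∨ v ∈ q.support) : G.IsHamiltonian := by
  have hpath : (p.append q).IsPath := by
    rw [SimpleGraph.Walk.isPath_def, SimpleGraph.Walk.support_append, List.nodup_append]
    refine ⟨hp.support_nodup, hq.support_nodup.tail, ?_⟩
    rintro v hvp _ hvq rfl
    obtain rfl := hmeet v hvp (List.mem_of_mem_tail hvq)
    have hnodup := hq.support_nodup
    rw [← q.cons_tail_support, List.nodup_cons] at hnodup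
    exact hnodup.1 hvq
  have hedge : s(x, y) ∉ (p.append q).edges := by
    rw [SimpleGraph.Walk.edges_append, List.mem_append]
    rintro (h | h)
    · exact hxz (hmeet x (p.fst_mem_support_of_mem_edges h) q.end_mem_support)
    · exact hyz (hmeet y p.start_mem_support (q.snd_mem_support_of_mem_edges h))
  have hham : (p.append q).IsHamiltonian := hpath.isHamiltonian_of_mem fun v =>
    (SimpleGraph.Walk.mem_support_append_iff ..).2 (hcover v)
  exact fun _ => ⟨x, .cons hxy (p.append q),
    (SimpleGraph.Walk.cons_isCycle_iff _ _).2 ⟨hpath, hedge⟩, by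
      simpa [SimpleGraph.Walk.IsHamiltonian] using hham⟩

/-! ### Separations with three common vertices -/

/-- A separation of a graph: two vertex sets covering the graph such that no edge joins the
complement of one to the complement of the other. -/
structure IsSeparation {V : Type u} (G : SimpleGraph V) (A B : Set V) : Prop where
  union_eq : A ∪ B = univ
  mem_of_adj : ∀ ⦃u v : V⦄, G.Adj u v → (u ∈ A ∧ v ∈ A) ∨ (u ∈ B ∧ v ∈ B)

namespace IsSeparation

variable {V : Type u} {G : SimpleGraph V} {A B : Set V} {x y z : V}

lemma symm (h : IsSeparation G A B) : IsSeparation G B A :=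
  ⟨union_comm A B ▸ h.union_eq, fun _ _ huv => (h.mem_of_adj huv).symm⟩

lemma exists_adj (h : IsSeparation G A B) (hAB : A ∩ B = {x, y, z}) (hA : (A \ B).Nonempty)
    (hconn : (G.induce {w | w ≠ y ∧ w ≠ z}).Preconnected) (hxy : x ≠ y) (hxz : x ≠ z) :
    ∃ i ∈ A \ B, G.Adj x i := by
  have hmem (v : V) : v ∈ A ∧ v ∈ B ↔ v = x ∨ v = y ∨ v = z := by
    simpa using Set.ext_iff.1 hAB v
  obtain ⟨p, hp⟩ := hA
  have hpyz : p ≠ y ∧ p ≠ z := by grind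
  obtain ⟨walk⟩ := hconn ⟨p, hpyz⟩ ⟨x, hxy, hxz⟩
  obtain ⟨⟨⟨u, v⟩, huv⟩, -, hu, hv⟩ := walk.exists_boundary_dart {w | w.1 ∈ A \ B} hp
    (fun hx => hx.2 ((hmem x).2 (Or.inl rfl)).2)
  have hadj : G.Adj u v := huv
  have hvA : v.1 ∈ A := ((h.mem_of_adj hadj).resolve_right fun hB => hu.2 hB.1).2
  have hvB : v.1 ∈ B := by_contra fun hB => hv ⟨hvA, hB⟩
  have hvx : v.1 = x := ((hmem v).1 ⟨hvA, hvB⟩).resolve_right fun hyz => hyz.elim v.2.1 v.2.2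
  exact ⟨u, hu, hvx ▸ hadj.symm⟩

lemma exists_adj_iff [Finite V] (h : IsSeparation G A B) (hAB : A ∩ B = {x, y, z})
    (hA : (A \ B).Nonempty) (hB : (B \ A).Nonempty)
    (hconn : (G.induce {w | w ≠ y ∧ w ≠ z}).Preconnected) (hdeg : (G.neighborSet x).ncard ≤ 4)
    (hxy : G.Adj x y) (hxz : G.Adj x z) (hyz : y ≠ z) :
    ∃ i ∈ A \ B, ∀ w ∈ A, G.Adj x w ↔ w = y ∨ w = z ∨ w = i := by
  obtain ⟨i, hi, hxi⟩ := h.exists_adj hAB hA hconn hxy.ne hxz.ne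
  obtain ⟨o, ho, hxo⟩ := h.symm.exists_adj (inter_comm A B ▸ hAB) hB hconn hxy.ne hxz.ne
  have hmem (v : V) : v ∈ A ∧ v ∈ B ↔ v = x ∨ v = y ∨ v = z := by
    simpa using Set.ext_iff.1 hAB v
  have hcard : ({y, z, i, o} : Set V).ncard = 4 := by
    rw [ncard_insert_of_notMem (by grind), ncard_eq_three.2 ⟨z, i, o, by grind⟩]
  have hnbr : ({y, z, i, o} : Set V) = G.neighborSet x :=
    Set.eq_of_subset_of_ncard_le (by rintro w (rfl | rfl | rfl | rfl) <;> assumption)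
      (hdeg.trans hcard.ge)
  refine ⟨i, hi, fun w hw => ?_⟩
  have hwo : w ≠ o := fun hwo => ho.2 (hwo ▸ hw)
  rw [← SimpleGraph.mem_neighborSet, ← hnbr]
  simp [hwo]

end IsSeparation

lemma nonempty_sdiff_of_notMem_cycleEdges {V : Type u} {A B : Set V} {x y z : V}
    {σ : ZMod (Nat.card A) ≃ A} (hAB : A ∩ B = {x, y, z}) (hxy : x ≠ y) (hxz : x ≠ z) (hyz : y ≠ z)
    (hσ : s(y, z) ∉ Sym2.map Subtype.val '' cycleEdges σ) : (A \ B).Nonempty := by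
  rw [sdiff_nonempty]
  intro hsub
  rw [inter_eq_left.2 hsub] at hAB
  have hcard : Nat.card A = 3 := by
    rw [Nat.card_coe_set_eq, hAB]
    exact ncard_eq_three.2 ⟨x, y, z, hxy, hxz, hyz, rfl⟩
  refine hσ (mk_mem_image_cycleEdges.2 ⟨by simp [hAB], by simp [hAB], ?_⟩)
  exact mk_mem_cycleEdges_of_card_eq_three hcard (by simpa using hyz)

/-! ### Merging subhamiltonian cycles -/

section Merge

variable {V : Type u} {G : SimpleGraph V} {S A B : Set V} {x y z i : V}

lemma spanningCoe_adj_iff {H : SimpleGraph S} {u v : V} :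
    H.spanningCoe.Adj u v ↔ ∃ (hu : u ∈ S) (hv : v ∈ S), H.Adj ⟨u, hu⟩ ⟨v, hv⟩ := by
  constructor
  · rintro ⟨-, u, v, h, rfl, rfl⟩
    exact ⟨u.2, v.2, h⟩
  · rintro ⟨hu, hv, h⟩
    exact SimpleGraph.map_adj_apply' h fun huv => h.ne (Subtype.ext huv)

/-- `M` is a planar augmentation of `G.induce S` prepared for gluing along the triangle `x y z`:
in some drawing of it that triangle is straight-line and empty, and its vertices other than `x`
are traversed by a path from `y` to `z`. -/
structure IsTriangleAugmentation (G : SimpleGraph V) (S : Set V) (x y z : V)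
    (M : SimpleGraph V) : Prop where
  le : (G.induce S).spanningCoe ≤ M
  exists_isTriangle : ∃ (D : PlaneDrawing M S) (a b c : ℂ), D.IsTriangle x y z a b c
  exists_isPath : ∃ p : M.Walk y z, p.IsPath ∧ ∀ v, v ∈ p.support ↔ v ∈ S ∧ v ≠ x

lemma IsTriangleAugmentation.adj {M : SimpleGraph V} (h : IsTriangleAugmentation G S x y z M)
    {u v : V} (hu : u ∈ S) (hv : v ∈ S) (huv : G.Adj u v) : M.Adj u v :=
  h.le (spanningCoe_adj_iff.2 ⟨hu, hv, huv⟩)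

lemma isTriangleAugmentation_sup_cyclicSuccGraph [Finite V] {σ : ZMod (Nat.card S) ≃ S}
    (hσ : (G.induce S).IsSubhamiltonianCycle σ)
    (hxy : s(x, y) ∈ Sym2.map Subtype.val '' cycleEdges σ)
    (hxz : s(x, z) ∈ Sym2.map Subtype.val '' cycleEdges σ) (hi : i ∈ S) (hyi : y ≠ i)
    (hzi : z ≠ i) (hadj : ∀ w ∈ S, G.Adj x w ↔ w = y ∨ w = z ∨ w = i) (hyz : G.Adj y z) :
    IsTriangleAugmentation G S x y z (G.induce S ⊔ cyclicSuccGraph σ).spanningCoe := by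
  obtain ⟨hx, hy, hxy⟩ := mk_mem_image_cycleEdges.1 hxy
  obtain ⟨_, hz, hxz⟩ := mk_mem_image_cycleEdges.1 hxz
  obtain ⟨E⟩ := hσ
  obtain ⟨D⟩ := E.nonempty_planeDrawing_spanningCoe
  have hyz' : (⟨y, hy⟩ : S) ≠ ⟨z, hz⟩ := by simpa using hyz.ne
  have hsup (w : S) : (G.induce S ⊔ cyclicSuccGraph σ).Adj ⟨x, hx⟩ w ↔ G.Adj x w :=
    sup_cyclicSuccGraph_adj hxy hxz hyz' ((hadj y hy).2 (Or.inl rfl))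
      ((hadj z hz).2 (Or.inr (Or.inl rfl)))
  have hnbr (w : V) : (G.induce S ⊔ cyclicSuccGraph σ).spanningCoe.Adj x w ↔
      w = y ∨ w = z ∨ w = i := by
    simp only [spanningCoe_adj_iff, hsup, hx, exists_true_left]
    refine ⟨fun ⟨hw, h⟩ => (hadj w hw).1 h, fun h => ?_⟩
    have hw : w ∈ S := by rcases h with rfl | rfl | rfl <;> assumption
    exact ⟨hw, (hadj w hw).2 h⟩
  obtain ⟨p, hp, hsupp⟩ := exists_isPath_of_mem_cycleEdges hxy hxz hyz'
  let q : (G.induce S ⊔ cyclicSuccGraph σ).spanningCoe.Walk y z :=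
    (p.mapLe le_sup_right).map (SimpleGraph.Embedding.spanningCoe _).toHom
  have hq : q.support = p.support.map Subtype.val :=
    (SimpleGraph.Walk.support_map ..).trans
      (congrArg _ (SimpleGraph.Walk.support_mapLe_eq_support ..))
  refine ⟨SimpleGraph.map_monotone _ le_sup_left,
    D.exists_isTriangle hnbr (spanningCoe_adj_iff.2 ⟨hy, hz, Or.inl hyz⟩) hyi hzi,
    q, (hp.mapLe le_sup_right).map Subtype.val_injective, fun v => ?_⟩
  simp [hq, hsupp]

lemma IsSeparation.isSubhamiltonian [Fintype V] (h : IsSeparation G A B)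
    (hAB : A ∩ B = {x, y, z}) (hxy : G.Adj x y) (hxz : G.Adj x z) (hyz : G.Adj y z)
    {M N : SimpleGraph V} (hM : IsTriangleAugmentation G A x y z M)
    (hN : IsTriangleAugmentation G B y x z N) : G.IsSubhamiltonian := by
  have hmem (v : V) : v ∈ A ∧ v ∈ B ↔ v = x ∨ v = y ∨ v = z := by
    simpa using Set.ext_iff.1 hAB v
  obtain ⟨hxA, hxB⟩ := (hmem x).2 (Or.inl rfl)
  obtain ⟨hyA, hyB⟩ := (hmem y).2 (Or.inr (Or.inl rfl))
  obtain ⟨hzA, hzB⟩ := (hmem z).2 (Or.inr (Or.inr rfl))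
  obtain ⟨D₁, a, b, c, h₁⟩ := hM.exists_isTriangle
  obtain ⟨D₂, a', b', c', h₂⟩ := hN.exists_isTriangle
  obtain ⟨D⟩ := PlaneDrawing.nonempty_sup_of_isTriangle (hN.adj hxB hyB hxy) (hN.adj hxB hzB hxz)
    (hN.adj hyB hzB hyz) h₁ h₂.swap hAB (hM.adj hxA hyA hxy) (hM.adj hxA hzA hxz)
    (hM.adj hyA hzA hyz)
  rw [h.union_eq] at D
  obtain ⟨p, hp, hpsupp⟩ := hM.exists_isPath
  obtain ⟨q, hq, hqsupp⟩ := hN.exists_isPath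
  refine ⟨M ⊔ N, fun u v huv => ?_, D.isPlanar, ?_⟩
  · exact (h.mem_of_adj huv).imp (fun hA => hM.adj hA.1 hA.2 huv) fun hB => hN.adj hB.1 hB.2 huv
  · classical
    convert isHamiltonian_of_isPath (hp.mapLe (le_sup_left (b := N)))
      (hq.mapLe (le_sup_right (a := M))).reverse (Or.inl (hM.adj hxA hyA hxy)) hxz.ne hyz.ne ?_ ?_
    · simp only [SimpleGraph.Walk.support_reverse, SimpleGraph.Walk.support_mapLe_eq_support,
        List.mem_reverse, hpsupp, hqsupp]
      grind
    · intro v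
      simp only [SimpleGraph.Walk.support_reverse, SimpleGraph.Walk.support_mapLe_eq_support,
        List.mem_reverse, hpsupp, hqsupp]
      have hv := eq_univ_iff_forall.1 h.union_eq v
      have hne := hxy.ne
      grind

lemma IsSeparation.isSubhamiltonian_of_isSubhamiltonianCycle [Fintype V]
    (h : IsSeparation G A B) (hAB : A ∩ B = {x, y, z}) (hxy : G.Adj x y) (hxz : G.Adj x z)
    (hyz : G.Adj y z) (hconn : ∀ u v, (G.induce {w | w ≠ u ∧ w ≠ v}).Preconnected)
    (hdeg : G.MaxDegreeLE 4) {σ : ZMod (Nat.card A) ≃ A} {τ : ZMod (Nat.card B) ≃ B}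
    (hσ : (G.induce A).IsSubhamiltonianCycle σ) (hτ : (G.induce B).IsSubhamiltonianCycle τ)
    (hσxy : s(x, y) ∈ Sym2.map Subtype.val '' cycleEdges σ)
    (hσxz : s(x, z) ∈ Sym2.map Subtype.val '' cycleEdges σ)
    (hσyz : s(y, z) ∉ Sym2.map Subtype.val '' cycleEdges σ)
    (hτxy : s(x, y) ∈ Sym2.map Subtype.val '' cycleEdges τ)
    (hτyz : s(y, z) ∈ Sym2.map Subtype.val '' cycleEdges τ)
    (hτxz : s(x, z) ∉ Sym2.map Subtype.val '' cycleEdges τ) : G.IsSubhamiltonian := by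
  have hBA : B ∩ A = {y, x, z} := by rw [inter_comm, hAB, insert_comm]
  have hA : (A \ B).Nonempty :=
    nonempty_sdiff_of_notMem_cycleEdges hAB hxy.ne hxz.ne hyz.ne hσyz
  have hB : (B \ A).Nonempty :=
    nonempty_sdiff_of_notMem_cycleEdges hBA hxy.ne' hyz.ne hxz.ne hτxz
  obtain ⟨i, hi, hxi⟩ := h.exists_adj_iff hAB hA hB (hconn y z) (hdeg x) hxy hxz hyz.ne
  obtain ⟨j, hj, hyj⟩ := h.symm.exists_adj_iff hBA hB hA (hconn x z) (hdeg y) hxy.symm hyz hxz.ne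
  have hmem (v : V) : v ∈ A ∧ v ∈ B ↔ v = x ∨ v = y ∨ v = z := by
    simpa using Set.ext_iff.1 hAB v
  exact h.isSubhamiltonian hAB hxy hxz hyz
    (isTriangleAugmentation_sup_cyclicSuccGraph hσ hσxy hσxz hi.1 (by grind) (by grind) hxi hyz)
    (isTriangleAugmentation_sup_cyclicSuccGraph hτ (Sym2.eq_swap ▸ hτxy) hτyz hj.1 (by grind)
      (by grind) hyj hxz)

end Merge

/-! ### The two sides of a triangle -/

namespace PlaneEmbedding

variable {V : Type u} {G : SimpleGraph V} (E : PlaneEmbedding G) {a b c u v s t : V}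

lemma disjoint_arc (huv : G.Adj u v) (hst : G.Adj s t) (hu : u ≠ s ∧ u ≠ t)
    (hv : v ≠ s ∧ v ≠ t) : Disjoint (E.arc huv) (E.arc hst) := by
  rw [disjoint_iff_inter_eq_empty, ← subset_empty_iff]
  refine (E.arc_inter huv hst (by grind [Sym2.eq_iff])).trans ?_
  rintro _ ⟨rfl | rfl, h | h⟩
  exacts [hu.1 (E.pos_inj h), hu.2 (E.pos_inj h), hv.1 (E.pos_inj h), hv.2 (E.pos_inj h)]

lemma connectedComponentIn_pos_eq_of_adj (hab : G.Adj a b) (hbc : G.Adj b c) (hac : G.Adj a c)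
    (huv : G.Adj u v) (hu : u ∉ ({a, b, c} : Set V)) (hv : v ∉ ({a, b, c} : Set V)) :
    connectedComponentIn (triangleDrawing E hab hbc hac)ᶜ (E.pos u) =
      connectedComponentIn (triangleDrawing E hab hbc hac)ᶜ (E.pos v) := by
  have harc := E.isArc_arc huv
  have hsub : E.arc huv ⊆ (triangleDrawing E hab hbc hac)ᶜ := by
    simp only [mem_insert_iff, mem_singleton_iff, not_or] at hu hv
    rw [subset_compl_iff_disjoint_right, triangleDrawing, disjoint_union_right,
      disjoint_union_right]
    exact ⟨⟨E.disjoint_arc huv hab ⟨hu.1, hu.2.1⟩ ⟨hv.1, hv.2.1⟩,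
      E.disjoint_arc huv hbc hu.2 hv.2⟩,
      E.disjoint_arc huv hac ⟨hu.1, hu.2.2⟩ ⟨hv.1, hv.2.2⟩⟩
  exact connectedComponentIn_eq
    (harc.isPreconnected.subset_connectedComponentIn harc.left_mem hsub harc.right_mem)

variable (hab : G.Adj a b) (hbc : G.Adj b c) (hac : G.Adj a c)

lemma closedInsideTriangle_inter_closedOutsideTriangle :
    closedInsideTriangle E hab hbc hac ∩ closedOutsideTriangle E hab hbc hac = {a, b, c} := by
  ext v
  simp only [closedOutsideTriangle, outsideTriangle, closedInsideTriangle, insideTriangle]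
  grind

lemma isSeparation_closedTriangle : IsSeparation G (closedInsideTriangle E hab hbc hac)
    (closedOutsideTriangle E hab hbc hac) where
  union_eq := by
    ext v
    simp only [closedOutsideTriangle, outsideTriangle, closedInsideTriangle, insideTriangle]
    grind
  mem_of_adj u v huv := by
    have := E.connectedComponentIn_pos_eq_of_adj hab hbc hac huv
    simp only [closedOutsideTriangle, outsideTriangle, closedInsideTriangle, insideTriangle]
    grind

end PlaneEmbedding

lemma exists_triangle_labelling {V : Type u} {a b c : V} {e f g : Sym2 V}
    (h : ({e, f, g} : Set (Sym2 V)) = {s(a, b), s(b, c), s(a, c)}) (hef : e ≠ f) (heg : e ≠ g)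
    (hfg : f ≠ g) :
    ∃ x y z, e = s(x, y) ∧ f = s(x, z) ∧ g = s(y, z) ∧ ({x, y, z} : Set V) = {a, b, c} := by
  have he : e ∈ ({e, f, g} : Set (Sym2 V)) := by simp
  have hf : f ∈ ({e, f, g} : Set (Sym2 V)) := by simp
  have hg : g ∈ ({e, f, g} : Set (Sym2 V)) := by simp
  rw [h] at he hf hg
  rcases he with rfl | rfl | rfl <;> rcases hf with rfl | rfl | rfl <;>
    rcases hg with rfl | rfl | rfl <;> first | contradiction | skip
  · exact ⟨b, a, c, Sym2.eq_swap, rfl, rfl, by grind⟩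
  · exact ⟨a, b, c, rfl, rfl, rfl, rfl⟩
  · exact ⟨b, c, a, rfl, Sym2.eq_swap, Sym2.eq_swap, by grind⟩
  · exact ⟨c, b, a, Sym2.eq_swap, Sym2.eq_swap, Sym2.eq_swap, by grind⟩
  · exact ⟨a, c, b, rfl, rfl, Sym2.eq_swap, by grind⟩
  · exact ⟨c, a, b, Sym2.eq_swap, Sym2.eq_swap, rfl, by grind⟩

/-- Let `T` be a separating triangle of a triconnected 4-planar graph
`G` with edge set `{e, ein, eout}`, and let `σin`, `σout` be subhamiltonian cycles of the
closed inside and outside subgraphs respectively. If `σin` uses exactly the edges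
`{ein, e}` of `T` and `σout` uses exactly the edges `{eout, e}` of `T`, then `G` is
subhamiltonian. -/
theorem merge_subhamiltonian_cycles_at_sep_triangle {V : Type u} [Fintype V]
    (G : SimpleGraph V) (h3 : G.IsTriconnected) (hplanar : G.IsPlanar)
    (hdeg : G.MaxDegreeLE 4) (E : PlaneEmbedding G)
    {a b c : V} (hT : G.IsSepTriangle a b c)
    (e ein eout : Sym2 V)
    (hedges : ({e, ein, eout} : Set (Sym2 V)) = {s(a, b), s(b, c), s(a, c)})
    (h1 : e ≠ ein) (h2 : e ≠ eout) (h3' : ein ≠ eout)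
    (σin : ZMod (Nat.card ↥(closedInsideTriangle E hT.1 hT.2.1 hT.2.2.1)) ≃
      ↥(closedInsideTriangle E hT.1 hT.2.1 hT.2.2.1))
    (σout : ZMod (Nat.card ↥(closedOutsideTriangle E hT.1 hT.2.1 hT.2.2.1)) ≃
      ↥(closedOutsideTriangle E hT.1 hT.2.1 hT.2.2.1))
    (hσin : (G.induce (closedInsideTriangle E hT.1 hT.2.1 hT.2.2.1)).IsSubhamiltonianCycle σin)
    (hσout : (G.induce (closedOutsideTriangle E hT.1 hT.2.1 hT.2.2.1)).IsSubhamiltonianCycle σout)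
    (husedin : Sym2.map (Subtype.val) '' cycleEdges σin ∩
      ({s(a, b), s(b, c), s(a, c)} : Set (Sym2 V)) = {ein, e})
    (husedout : Sym2.map (Subtype.val) '' cycleEdges σout ∩
      ({s(a, b), s(b, c), s(a, c)} : Set (Sym2 V)) = {eout, e}) :
    G.IsSubhamiltonian := by
  obtain ⟨x, y, z, rfl, rfl, rfl, hxyz⟩ := exists_triangle_labelling hedges h1 h2 h3'
  have hadj : ({s(a, b), s(b, c), s(a, c)} : Set (Sym2 V)) ⊆ G.edgeSet := by
    rintro _ (rfl | rfl | rfl)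
    exacts [hT.1, hT.2.1, hT.2.2.1]
  rw [← hedges] at husedin husedout hadj
  exact (E.isSeparation_closedTriangle _ _ _).isSubhamiltonian_of_isSubhamiltonianCycle
    ((E.closedInsideTriangle_inter_closedOutsideTriangle _ _ _).trans hxyz.symm)
    (hadj (.inl rfl)) (hadj (.inr (.inl rfl))) (hadj (.inr (.inr rfl)))
    (fun u v => (h3.2.2 u v).preconnected) hdeg hσin hσout
    (husedin.ge (.inr rfl)).1 (husedin.ge (.inl rfl)).1
    (fun h => (husedin.le ⟨h, .inr (.inr rfl)⟩).elim h3'.symm h2.symm)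
    (husedout.ge (.inr rfl)).1 (husedout.ge (.inl rfl)).1
    (fun h => (husedout.le ⟨h, .inr (.inl rfl)⟩).elim h3' h1.symm)
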